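/- Let d be a positive integer and 𝔞 a proper ideal of a commutative Noetherian local ring R such that either dim R = d, or dim R/𝔞 = d − 1, or ara(𝔞) = d − 1. Let X be a (ℤ-indexed) chain complex of R-modules ⋯ → X_{i+1} →^{d_{i+1}} X_i →^{d_i} X_{i−1} → ⋯ in which every module X_i is 𝔞-cofinite. Then the homology module H_i(X) is 𝔞-cofinite for every i ∈ ℤ if and only if the R-module Ext^j_R(R/𝔞, coker d_{i+1}) is finitely generated for every i ∈ ℤ and every integer 0 ≤ j ≤ d − 2, where coker d_{i+1} = X_i / im(d_{i+1} : X_{i+1} → X_i). -/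

import Mathlib

open CategoryTheory

universe u

/-- The `R`-module `Ext^i_R(N, M)` for two `R`-modules (objects of `ModuleCat R`). -/
noncomputable def extObj {R : Type u} [CommRing R] (N M : ModuleCat.{u} R) (i : ℕ) :
    ModuleCat.{u} R :=
  ((Ext R (ModuleCat.{u} R) i).obj (Opposite.op N)).obj M

/-- The `R`-module `Ext^i_R(R/𝔞, M)`. -/
noncomputable def extIdeal {R : Type u} [CommRing R] (𝔞 : Ideal R) (i : ℕ)
    (M : ModuleCat.{u} R) : ModuleCat.{u} R :=
  extObj (ModuleCat.of R (R ⧸ 𝔞)) M i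

/-- An `R`-module `M` is `𝔞`-cofinite if `Supp_R M ⊆ V(𝔞)` and `Ext^i_R(R/𝔞, M)` is a finitely
generated `R`-module for every `i ≥ 0`. -/
def IsCofinite {R : Type u} [CommRing R] (𝔞 : Ideal R) (M : ModuleCat.{u} R) : Prop :=
  Module.support R M ⊆ PrimeSpectrum.zeroLocus (𝔞 : Set R) ∧
    ∀ i : ℕ, Module.Finite R (extIdeal 𝔞 i M)

/-- The Krull dimension `dim_R M` of an `R`-module `M`: the Krull dimension of its support,
i.e. the supremum of `dim R/𝔭` over primes `𝔭` in the support of `M`. -/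
noncomputable def moduleDim (R : Type u) [CommRing R] (M : Type u) [AddCommGroup M]
    [Module R M] : WithBot ℕ∞ :=
  Order.krullDim (Module.support R M)

/-- An `R`-module `M` is in `FD_{≤n}` if there is a finitely generated submodule `N ⊆ M`
with `dim_R (M/N) ≤ n`. -/
def MemFD (R : Type u) [CommRing R] (n : ℕ) (M : Type u) [AddCommGroup M] [Module R M] : Prop :=
  ∃ N : Submodule R M, N.FG ∧ moduleDim R (M ⧸ N) ≤ (n : WithBot ℕ∞)

/-- An `R`-module `M` is `𝔞`-torsion if every element is annihilated by some power of `𝔞`. -/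
def IsTorsionIdeal {R : Type u} [CommRing R] (𝔞 : Ideal R) (M : Type u) [AddCommGroup M]
    [Module R M] : Prop :=
  ∀ m : M, ∃ n : ℕ, ∀ a ∈ 𝔞 ^ n, a • m = 0

/-- The arithmetic rank of an ideal `𝔞`: the least `n` such that there exist `a₁, …, aₙ ∈ R`
with `Rad (a₁, …, aₙ) = Rad 𝔞`. -/
noncomputable def arithRank {R : Type u} [CommRing R] (𝔞 : Ideal R) : ℕ :=
  sInf {n : ℕ | ∃ f : Fin n → R, (Ideal.span (Set.range f)).radical = 𝔞.radical}

universe v w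

section AlmostFinite

/-- An `R`-module which agrees with a finitely generated submodule at every prime of
coheight at least `s`. -/
def AlmostFinite (R : Type*) [CommRing R] (s : ℕ) (H : Type*) [AddCommGroup H] [Module R H] :
    Prop :=
  ∃ N : Submodule R H, N.FG ∧ ∀ p : PrimeSpectrum R, (s : ℕ∞) ≤ Order.coheight p →
    ∀ h : H, ∃ r ∉ p.asIdeal, r • h ∈ N

namespace AlmostFinite

variable {R : Type*} [CommRing R] {A B C : Type*} [AddCommGroup A] [Module R A]
  [AddCommGroup B] [Module R B] [AddCommGroup C] [Module R C] {s : ℕ}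

theorem of_finite [Module.Finite R A] : AlmostFinite R s A :=
  ⟨⊤, Module.Finite.fg_top, fun p _ _ => ⟨1, p.2.one_notMem, trivial⟩⟩

theorem eq_top_of_forall_exists_smul_mem {N : Submodule R A}
    (h : ∀ p : PrimeSpectrum R, ∀ a : A, ∃ r ∉ p.asIdeal, r • a ∈ N) : N = ⊤ := by
  rw [eq_top_iff]
  intro a _
  by_contra ha
  have hI : (N.comap (LinearMap.toSpanSingleton R A a)) ≠ ⊤ := by
    intro hI
    apply ha
    have : (1 : R) ∈ N.comap (LinearMap.toSpanSingleton R A a) := by rw [hI]; trivial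
    simpa using this
  obtain ⟨m, hm, hle⟩ := Ideal.exists_le_maximal _ hI
  obtain ⟨r, hr, hra⟩ := h ⟨m, hm.isPrime⟩ a
  exact hr (hle (by simpa using hra))

theorem finite_of_zero (hA : AlmostFinite R 0 A) : Module.Finite R A := by
  obtain ⟨N, hN, h⟩ := hA
  rw [Module.finite_def, ← eq_top_of_forall_exists_smul_mem (fun p => h p (by simp))]
  exact hN

theorem pi {ι : Type*} [Finite ι] (hA : AlmostFinite R s A) : AlmostFinite R s (ι → A) := by
  obtain ⟨N, hN, h⟩ := hA
  have : Module.Finite R N := Module.Finite.of_fg hN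
  refine ⟨LinearMap.range (N.subtype.compLeft ι), Module.Finite.iff_fg.1 inferInstance,
    fun p hp a => ?_⟩
  cases nonempty_fintype ι
  choose r hr hra using fun i => h p hp (a i)
  have hmem (i : ι) : (∏ i, r i) • a i ∈ N := by
    classical
    rw [← Finset.prod_erase_mul _ _ (Finset.mem_univ i), mul_smul]
    exact N.smul_mem _ (hra i)
  refine ⟨∏ i, r i, fun hp' => ?_, ⟨fun i => ⟨_, hmem i⟩, rfl⟩⟩
  obtain ⟨i, _, hi⟩ := (p.2.prod_mem_iff).1 hp'
  exact hr i hi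

variable [IsNoetherianRing R]

theorem of_exact (f : A →ₗ[R] B) (g : B →ₗ[R] C) (hfg : LinearMap.ker g ≤ LinearMap.range f)
    (hA : AlmostFinite R s A) (hC : AlmostFinite R s C) : AlmostFinite R s B := by
  obtain ⟨NA, hNA, hA⟩ := hA
  obtain ⟨NC, hNC, hC⟩ := hC
  have hfg' : (NC ⊓ LinearMap.range g).FG := by
    have := isNoetherian_of_fg_of_noetherian NC hNC
    exact Submodule.FG.of_le hNC inf_le_left
  obtain ⟨S, hS⟩ := hfg'
  have hSr : ∀ c ∈ S, ∃ b, g b = c := fun c hc =>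
    (show c ∈ NC ⊓ LinearMap.range g from hS ▸ Submodule.subset_span hc).2
  choose! σ hσ using hSr
  classical
  set N' := Submodule.span R ((S.image σ : Finset B) : Set B) with hN'
  have hgN' : N'.map g = NC ⊓ LinearMap.range g := by
    rw [hN', Submodule.map_span, ← hS]
    congr 1
    ext c
    simp only [Finset.coe_image, Set.mem_image, Finset.mem_coe]
    constructor
    · rintro ⟨b, ⟨c', hc', rfl⟩, rfl⟩
      rw [hσ c' hc']; exact hc'
    · intro hc
      exact ⟨σ c, ⟨c, hc, rfl⟩, hσ c hc⟩
  refine ⟨NA.map f ⊔ N', (hNA.map f).sup ⟨_, rfl⟩, fun p hp b => ?_⟩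
  obtain ⟨r, hr, hrb⟩ := hC p hp (g b)
  have : r • g b ∈ N'.map g := by
    rw [hgN']; exact ⟨hrb, ⟨r • b, by simp⟩⟩
  obtain ⟨n, hn, hnb⟩ := this
  obtain ⟨a, ha⟩ : r • b - n ∈ LinearMap.range f := hfg (by simp [hnb])
  obtain ⟨r', hr', hra⟩ := hA p hp a
  refine ⟨r' * r, fun h => (p.2.mem_or_mem h).elim hr' hr, ?_⟩
  have h1 : (r' * r) • b = f (r' • a) + r' • n := by
    rw [map_smul, ha, smul_sub, mul_smul]; abel
  rw [h1]
  exact Submodule.add_mem_sup ⟨_, hra, rfl⟩ (N'.smul_mem _ hn)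

theorem of_injective (g : B →ₗ[R] C) (hg : Function.Injective g) (hC : AlmostFinite R s C) :
    AlmostFinite R s B :=
  of_exact (A := PUnit) (0 : PUnit →ₗ[R] B) g (by rw [LinearMap.ker_eq_bot.2 hg]; exact bot_le)
    of_finite hC

theorem of_surjective (f : A →ₗ[R] B) (hf : Function.Surjective f) (hA : AlmostFinite R s A) :
    AlmostFinite R s B :=
  of_exact (C := PUnit) f (0 : B →ₗ[R] PUnit) (by rw [LinearMap.range_eq_top.2 hf]; exact le_top)
    hA of_finite

theorem of_le {N₁ N₂ : Submodule R A} (h : N₁ ≤ N₂) (hN : AlmostFinite R s N₂) :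
    AlmostFinite R s N₁ :=
  of_injective (Submodule.inclusion h) (Submodule.inclusion_injective h) hN

theorem of_smul_mem {I : Ideal R} {K N : Submodule R A} (hN : AlmostFinite R s N)
    (hT : AlmostFinite R s (Submodule.torsionBySet R A I)) (hK : ∀ k ∈ K, ∀ a ∈ I, a • k ∈ N) :
    AlmostFinite R s K := by
  obtain ⟨S, hS⟩ := (IsNoetherian.noetherian I : I.FG)
  have hSI : ∀ a ∈ S, a ∈ I := fun a ha => hS ▸ Submodule.subset_span ha
  let g : K →ₗ[R] (S → N) :=
    { toFun := fun k a => ⟨(a : R) • (k : A), hK k k.2 a (hSI a a.2)⟩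
      map_add' := fun _ _ => by ext; simp
      map_smul' := fun r k => by ext; simp [smul_comm r] }
  refine of_exact (Submodule.inclusion (inf_le_left : K ⊓ Submodule.torsionBySet R A I ≤ K)) g ?_
    (of_le inf_le_right hT) hN.pi
  intro k hk
  refine ⟨⟨k, k.2, ?_⟩, rfl⟩
  have : Submodule.torsionBySet R A I = Submodule.torsionBySet R A (S : Set R) := by
    rw [Submodule.torsionBySet_eq_torsionBySet_span (S : Set R)]
    exact congrArg (fun J : Ideal R => Submodule.torsionBySet R A (J : Set R)) hS.symm
  rw [this, SetLike.mem_coe, Submodule.mem_torsionBySet_iff]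
  intro a
  exact congrArg Subtype.val (congrFun hk a)

theorem torsionBySet_pow {I : Ideal R} (hT : AlmostFinite R s (Submodule.torsionBySet R A I))
    (k : ℕ) : AlmostFinite R s (Submodule.torsionBySet R A ((I ^ k : Ideal R) : Set R)) := by
  induction k with
  | zero =>
    refine of_injective (C := PUnit.{1}) 0 (fun x y _ => ?_) of_finite
    have h (x : Submodule.torsionBySet R A ((I ^ 0 : Ideal R) : Set R)) : x = 0 := by
      ext
      simpa using (Submodule.mem_torsionBySet_iff _ _).1 x.2 ⟨1, by simp⟩
    rw [h x, h y]
  | succ k ih =>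
    refine of_smul_mem (I := I) ih hT fun x hx a ha => ?_
    rw [Submodule.mem_torsionBySet_iff] at hx ⊢
    rintro ⟨b, hb⟩
    rw [smul_smul]
    exact hx ⟨b * a, by rw [pow_succ]; exact Ideal.mul_mem_mul hb ha⟩

end AlmostFinite

end AlmostFinite

section Artinian

open Submodule

variable {R : Type*} [CommRing R]

theorem isArtinian_of_torsionBy {M : Type*} [AddCommGroup M] [Module R M] (x : R)
    (hx : ∀ m : M, ∃ k : ℕ, x ^ k • m = 0) (hM : IsArtinian R (torsionBy R M x)) :
    IsArtinian R M := by
  rw [← monotone_stabilizes_iff_artinian]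
  intro B
  have hB {i j : ℕ} (hij : i ≤ j) {b : M} (hb : b ∈ OrderDual.ofDual (B j)) :
      b ∈ OrderDual.ofDual (B i) := (show OrderDual.ofDual (B j) ≤ OrderDual.ofDual (B i) from
        B.monotone hij) hb
  let L (i k : ℕ) : Submodule R (torsionBy R M x) :=
    ((OrderDual.ofDual (B i) ⊓ torsionBy R M (x ^ (k + 1))).map
      (LinearMap.lsmul R M (x ^ k))).comap (torsionBy R M x).subtype
  have hL {i j : ℕ} (hij : i ≤ j) (k : ℕ) : L j k ≤ L i k := by
    rintro m ⟨b, ⟨hb, hb'⟩, hbm⟩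
    exact ⟨b, ⟨hB hij hb, hb'⟩, hbm⟩
  have hL' (i : ℕ) : Antitone (L i) := by
    refine antitone_nat_of_succ_le fun k => ?_
    rintro m ⟨b, ⟨hb, hb'⟩, hbm⟩
    refine ⟨x • b, ⟨smul_mem _ _ hb, ?_⟩, ?_⟩
    · simpa [smul_smul, pow_succ, mul_comm, mul_left_comm] using hb'
    · simpa [smul_smul, pow_succ, mul_comm] using hbm
  obtain ⟨n₀, hn₀⟩ := IsArtinian.monotone_stabilizes (R := R) (M := torsionBy R M x)
    ⟨fun n => OrderDual.toDual (L n n), fun i j hij => (hL hij j).trans (hL' i hij)⟩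
  replace hn₀ (m : ℕ) (hm : n₀ ≤ m) : L n₀ n₀ = L m m := hn₀ m hm
  have hst (k : ℕ) : ∃ n, ∀ m, n ≤ m → L n k = L m k :=
    IsArtinian.monotone_stabilizes (R := R) (M := torsionBy R M x)
      ⟨fun n => OrderDual.toDual (L n k), fun i j hij => hL hij k⟩
  choose ν hν using hst
  set n := n₀ + ∑ k ∈ Finset.range n₀, ν k with hn
  have key (i : ℕ) (hi : n ≤ i) (k : ℕ) : L n k ≤ L i k := by
    rcases lt_or_ge k n₀ with hk | hk
    · have : ν k ≤ n := (Finset.single_le_sum (f := ν) (fun _ _ => Nat.zero_le _)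
        (Finset.mem_range.2 hk)).trans (by omega)
      rw [← hν k n this, hν k i (this.trans hi)]
    · calc L n k ≤ L n₀ n₀ := (hL (by omega) k).trans (hL' _ hk)
        _ = L (max i k) (max i k) := hn₀ _ (by omega)
        _ ≤ L i k := (hL (le_max_left _ _) _).trans (hL' _ (le_max_right _ _))
  refine ⟨n, fun i hi => le_antisymm (B.monotone hi) ?_⟩
  have hk (k : ℕ) : ∀ b ∈ OrderDual.ofDual (B n), x ^ k • b = 0 → b ∈ OrderDual.ofDual (B i) := by
    induction k with
    | zero => intro b _ hb; simp at hb; simp [hb]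
    | succ k ih =>
      intro b hb hbk
      have hxb : x ^ k • b ∈ torsionBy R M x := by
        rw [mem_torsionBy_iff, smul_smul, ← pow_succ']; exact hbk
      have : (⟨x ^ k • b, hxb⟩ : torsionBy R M x) ∈ L i k :=
        key i hi k ⟨b, ⟨hb, hbk⟩, rfl⟩
      obtain ⟨b', ⟨hb', _⟩, hbb'⟩ := this
      have h1 : b - b' ∈ OrderDual.ofDual (B i) := by
        refine ih _ (sub_mem hb (hB hi hb')) ?_
        rw [smul_sub, sub_eq_zero]
        exact hbb'.symm
      simpa using add_mem h1 hb'
  intro b hb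
  obtain ⟨k, hk'⟩ := hx b
  exact hk k b hb hk'

theorem isArtinian_of_torsionBySet [IsNoetherianRing R] (I : Ideal R) {M : Type v}
    [AddCommGroup M] [Module R M] (hI : ∀ m : M, ∃ k : ℕ, ∀ a ∈ I ^ k, a • m = 0)
    (hM : IsArtinian R (torsionBySet R M I)) : IsArtinian R M := by
  revert M
  refine fg_induction (motive := fun (I : Ideal R) _ => ∀ {M : Type v} [AddCommGroup M]
    [Module R M], (∀ m : M, ∃ k : ℕ, ∀ a ∈ I ^ k, a • m = 0) →
      IsArtinian R (torsionBySet R M I) → IsArtinian R M) ?_ ?_ I (IsNoetherian.noetherian I)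
  · intro x M _ _ hI hM
    refine isArtinian_of_torsionBy x (fun m => ?_) ?_
    · obtain ⟨k, hk⟩ := hI m
      exact ⟨k, hk _ (Ideal.pow_mem_pow (mem_span_singleton_self x) k)⟩
    · rwa [torsionBySet_span_singleton_eq] at hM
  · intro I₁ I₂ _ _ h₁ h₂ M _ _ hI hM
    have hI' (J : Ideal R) (hJ : J ≤ I₁ ⊔ I₂) (m : M) : ∃ k : ℕ, ∀ a ∈ J ^ k, a • m = 0 := by
      obtain ⟨k, hk⟩ := hI m
      exact ⟨k, fun a ha => hk a (Ideal.pow_right_mono hJ k ha)⟩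
    refine h₂ (hI' I₂ le_sup_right) (h₁ (fun m => ?_) ?_)
    · obtain ⟨k, hk⟩ := hI' I₁ le_sup_left m
      exact ⟨k, fun a ha => Subtype.ext (hk a ha)⟩
    · let f : torsionBySet R (torsionBySet R M I₂) I₁ →ₗ[R]
          torsionBySet R M ((I₁ ⊔ I₂ : Ideal R) : Set R) :=
        LinearMap.codRestrict _ ((torsionBySet R M I₂).subtype ∘ₗ Submodule.subtype _)
          fun m => by
            rw [mem_torsionBySet_iff]
            rintro ⟨a, ha⟩
            obtain ⟨a₁, h₁, a₂, h₂, rfl⟩ := mem_sup.1 ha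
            have e₁ := congrArg Subtype.val ((mem_torsionBySet_iff _ _).1 m.2 ⟨a₁, h₁⟩)
            have e₂ := (mem_torsionBySet_iff _ _).1 m.1.2 ⟨a₂, h₂⟩
            simp only [LinearMap.comp_apply, subtype_apply, add_smul] at *
            rw [e₂, add_zero]
            exact e₁
      refine isArtinian_of_injective f fun m m' h => ?_
      exact Subtype.ext (Subtype.ext (show (f m : M) = f m' from congrArg Subtype.val h))

theorem exists_primes_forall_sub_smul_mem {A : Type*} [AddCommGroup A] [Module R A]
    [IsArtinian R A] [IsNoetherianRing R] (I : Ideal R) (B : Submodule R A) :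
    ∃ (P : Finset (Ideal R)) (k : ℕ), (∀ p ∈ P, p.IsPrime ∧ ¬ I ≤ p) ∧
      ∀ x ∈ I, (∀ p ∈ P, x ∉ p) → ∀ b ∈ B, ∃ c ∈ B,
        b - x • c ∈ torsionBySet R A ((I ^ k : Ideal R) : Set R) := by
  classical
  induction B using WellFoundedLT.induction with
  | ind B ih =>
  by_cases hB : ∃ B₁ < B, ∃ B₂ < B, B = B₁ ⊔ B₂
  · obtain ⟨B₁, h₁, B₂, h₂, rfl⟩ := hB
    obtain ⟨P₁, k₁, hP₁, H₁⟩ := ih B₁ h₁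
    obtain ⟨P₂, k₂, hP₂, H₂⟩ := ih B₂ h₂
    refine ⟨P₁ ∪ P₂, k₁ + k₂, fun p hp => (Finset.mem_union.1 hp).elim (hP₁ p) (hP₂ p), ?_⟩
    intro x hx hxP b hb
    obtain ⟨b₁, hb₁, b₂, hb₂, rfl⟩ := mem_sup.1 hb
    obtain ⟨c₁, hc₁, e₁⟩ := H₁ x hx (fun p hp => hxP p (Finset.mem_union_left _ hp)) b₁ hb₁
    obtain ⟨c₂, hc₂, e₂⟩ := H₂ x hx (fun p hp => hxP p (Finset.mem_union_right _ hp)) b₂ hb₂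
    refine ⟨c₁ + c₂, add_mem_sup hc₁ hc₂, ?_⟩
    have e : b₁ + b₂ - x • (c₁ + c₂) = (b₁ - x • c₁) + (b₂ - x • c₂) := by
      rw [smul_add]; abel
    rw [e]
    exact add_mem (torsionBySet_le_torsionBySet_pow _ _ (by omega) I e₁)
      (torsionBySet_le_torsionBySet_pow _ _ (by omega) I e₂)
  have hdich (x : R) : (∃ k : ℕ, ∀ b ∈ B, x ^ k • b = 0) ∨ ∀ b ∈ B, ∃ c ∈ B, b = x • c := by
    have hmono : Monotone fun n : ℕ =>
        OrderDual.toDual (B.map (LinearMap.lsmul R A (x ^ n))) := by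
      refine monotone_nat_of_le_succ fun n => ?_
      rintro m ⟨b, hb, rfl⟩
      exact ⟨x • b, smul_mem _ _ hb, by simp [smul_smul, pow_succ, mul_comm]⟩
    obtain ⟨n, hn⟩ := IsArtinian.monotone_stabilizes (R := R) (M := A) ⟨_, hmono⟩
    replace hn (m : ℕ) (hm : n ≤ m) : B.map (LinearMap.lsmul R A (x ^ n)) =
      B.map (LinearMap.lsmul R A (x ^ m)) := hn m hm
    set B₁ := B ⊓ torsionBy R A (x ^ n)
    set B₂ := B.map (LinearMap.lsmul R A (x ^ n))
    have hB₁ : B₁ ≤ B := inf_le_left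
    have hB₂ : B₂ ≤ B := by
      rintro _ ⟨b, hb, rfl⟩
      exact smul_mem _ _ hb
    have hsup : B = B₁ ⊔ B₂ := by
      refine le_antisymm (fun b hb => ?_) (sup_le hB₁ hB₂)
      have : x ^ n • b ∈ B.map (LinearMap.lsmul R A (x ^ (n + n))) := by
        rw [← hn (n + n) (by omega)]
        exact ⟨b, hb, rfl⟩
      obtain ⟨c, hc, hcb⟩ := this
      have hc' : x ^ n • c ∈ B₂ := ⟨c, hc, rfl⟩
      have : b = (b - x ^ n • c) + x ^ n • c := by abel
      rw [this]
      refine add_mem_sup ⟨sub_mem hb (hB₂ hc'), ?_⟩ hc'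
      change x ^ n • (b - x ^ n • c) = 0
      rw [smul_sub, smul_smul, ← pow_add, sub_eq_zero]
      exact hcb.symm
    by_cases h1 : B₁ = B
    · exact Or.inl ⟨n, fun b hb => (h1.ge hb).2⟩
    by_cases h2 : B₂ = B
    · refine Or.inr fun b hb => ?_
      have : b ∈ B.map (LinearMap.lsmul R A (x ^ (n + 1))) := by
        rw [← hn _ (Nat.le_succ n)]; exact h2.ge hb
      obtain ⟨c, hc, rfl⟩ := this
      exact ⟨x ^ n • c, smul_mem _ _ hc, by simp [smul_smul, pow_succ']⟩
    · exact (hB ⟨B₁, lt_of_le_of_ne hB₁ h1, B₂, lt_of_le_of_ne hB₂ h2, hsup⟩).elim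
  have hrad (x : R) : x ∈ (Module.annihilator R B).radical ↔ ∃ k : ℕ, ∀ b ∈ B, x ^ k • b = 0 := by
    simp only [Ideal.radical, Submodule.mem_mk, Module.mem_annihilator, Subtype.forall,
      Subtype.ext_iff]
    rfl
  by_cases hI : I ≤ (Module.annihilator R B).radical
  · obtain ⟨k, hk⟩ := Ideal.exists_pow_le_of_le_radical_of_fg hI (IsNoetherian.noetherian I)
    refine ⟨∅, k, by simp, fun x _ _ b hb => ⟨0, zero_mem _, ?_⟩⟩
    rw [smul_zero, sub_zero, mem_torsionBySet_iff]
    rintro ⟨a, ha⟩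
    exact congrArg Subtype.val (Module.mem_annihilator.1 (hk ha) ⟨b, hb⟩)
  · refine ⟨{(Module.annihilator R B).radical}, 0, fun p hp => ?_, fun x hx hxP b hb => ?_⟩
    · rw [Finset.mem_singleton.1 hp]
      refine ⟨⟨fun h => hI (h ▸ le_top), fun {x y} hxy => ?_⟩, hI⟩
      by_contra! hcon
      have h1 := (hdich x).resolve_left (by rw [← hrad]; exact hcon.1)
      have h2 := (hdich y).resolve_left (by rw [← hrad]; exact hcon.2)
      obtain ⟨k, hk⟩ := (hrad _).1 hxy
      refine hcon.1 ((hrad _).2 ⟨0, fun b hb => ?_⟩)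
      have : ∀ k : ℕ, ∀ b ∈ B, ∃ c ∈ B, b = (x * y) ^ k • c := by
        intro k
        induction k with
        | zero => exact fun b hb => ⟨b, hb, by simp⟩
        | succ k ih =>
          intro b hb
          obtain ⟨c, hc, rfl⟩ := ih b hb
          obtain ⟨c₁, hc₁, rfl⟩ := h1 c hc
          obtain ⟨c₂, hc₂, rfl⟩ := h2 c₁ hc₁
          exact ⟨c₂, hc₂, by simp [smul_smul, pow_succ]⟩
      obtain ⟨c, hc, rfl⟩ := this k b hb
      rw [hk c hc, smul_zero]
    · have := hxP _ (Finset.mem_singleton_self _)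
      rw [hrad] at this
      obtain ⟨c, hc, rfl⟩ := (hdich x).resolve_left this b hb
      exact ⟨c, hc, by simp⟩

end Artinian

section Localization

open Submodule

theorem exists_notMem_forall_smul_eq_zero {R : Type*} [CommRing R] {H : Type*} [AddCommGroup H]
    [Module R H] (p : PrimeSpectrum R) {I : Ideal R} (hI : I.FG) {h : H}
    (hh : ∀ a ∈ I, ∃ r ∉ p.asIdeal, r • a • h = 0) :
    ∃ r ∉ p.asIdeal, r • h ∈ torsionBySet R H (I : Set R) := by
  obtain ⟨S, rfl⟩ := hI
  choose! r hr hrh using hh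
  refine ⟨∏ a ∈ S, r a, fun hmem => ?_, ?_⟩
  · obtain ⟨a, ha, ha'⟩ := (p.2.prod_mem_iff).1 hmem
    exact hr a (subset_span ha) ha'
  · change _ ∈ torsionBySet R H (span R (S : Set R) : Set R)
    rw [← torsionBySet_eq_torsionBySet_span, mem_torsionBySet_iff]
    rintro ⟨a, ha⟩
    classical
    rw [Finset.mem_coe] at ha
    change a • _ = (0 : H)
    rw [smul_smul, ← Finset.prod_erase_mul _ _ ha, mul_left_comm, mul_smul, mul_comm a, mul_smul,
      hrh a (subset_span ha), smul_zero]

theorem isArtinian_of_finite_of_maximalIdeal_pow {R : Type*} [CommRing R] [IsNoetherianRing R]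
    [IsLocalRing R] {M : Type*} [AddCommGroup M] [Module R M] [Module.Finite R M]
    (hM : ∀ m : M, ∃ k : ℕ, ∀ a ∈ IsLocalRing.maximalIdeal R ^ k, a • m = 0) :
    IsArtinian R M := by
  refine isArtinian_of_torsionBySet (IsLocalRing.maximalIdeal R) hM ?_
  have : IsArtinianRing (R ⧸ IsLocalRing.maximalIdeal R) := by
    let := Ideal.Quotient.field (IsLocalRing.maximalIdeal R)
    infer_instance
  have : Module.Finite (R ⧸ IsLocalRing.maximalIdeal R)
      (torsionBySet R M (IsLocalRing.maximalIdeal R)) :=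
    Module.Finite.of_restrictScalars_finite R _ _
  exact isArtinian_of_surjective_algebraMap (R := R ⧸ IsLocalRing.maximalIdeal R)
    Ideal.Quotient.mk_surjective

theorem exists_primes_forall_exists_fg_atPrime {R : Type*} [CommRing R] [IsNoetherianRing R]
    (𝔞 : Ideal R) {H : Type*} [AddCommGroup H] [Module R H] (p : PrimeSpectrum R)
    (htor : ∀ h : H, ∃ k : ℕ, ∀ a ∈ 𝔞 ^ k, a • h = 0)
    (hsupp : ∀ q < p, ∀ h : H, ∃ r ∉ q.asIdeal, r • h = 0)
    (hK : ∃ N : Submodule R H, N.FG ∧ ∀ h ∈ torsionBySet R H (𝔞 : Set R),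
      ∃ r ∉ p.asIdeal, r • h ∈ N) :
    ∃ P : Finset (Ideal R), (∀ q ∈ P, q.IsPrime ∧ ¬ 𝔞 ≤ q) ∧ ∀ x ∈ 𝔞, (∀ q ∈ P, x ∉ q) →
      ∃ N : Submodule R H, N.FG ∧
        ∀ h : H, ∃ r ∉ p.asIdeal, r • h ∈ N ⊔ LinearMap.range (LinearMap.lsmul R H x) := by
  classical
  obtain ⟨N, hN, hK⟩ := hK
  let S := p.asIdeal.primeCompl
  let Λ := Localization.AtPrime p.asIdeal
  let L := LocalizedModule S H
  let f : H →ₗ[R] L := LocalizedModule.mkLinearMap S H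
  let J : Ideal Λ := 𝔞.map (algebraMap R Λ)
  have : IsNoetherianRing Λ := IsLocalization.isNoetherianRing S Λ inferInstance
  have hsurj (m : L) : ∃ h : H, ∃ s : S, IsLocalizedModule.mk' f h s = m := by
    obtain ⟨⟨h, s⟩, e⟩ := IsLocalizedModule.mk'_surjective S f m
    exact ⟨h, s, e⟩
  have htorL (m : L) : ∃ k : ℕ, ∀ a ∈ J ^ k, a • m = 0 := by
    obtain ⟨h, s, rfl⟩ := hsurj m
    obtain ⟨k, hk⟩ := htor h
    refine ⟨k, fun a ha => ?_⟩
    have : J ^ k ≤ LinearMap.ker (LinearMap.toSpanSingleton Λ L (IsLocalizedModule.mk' f h s)) := by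
      rw [← Ideal.map_pow, Ideal.map_le_iff_le_comap]
      intro a ha
      rw [Ideal.mem_comap, LinearMap.mem_ker, LinearMap.toSpanSingleton_apply, algebraMap_smul,
        ← IsLocalizedModule.mk'_smul, hk a ha, IsLocalizedModule.mk'_zero]
    simpa using this ha
  have hT : (torsionBySet Λ L (J : Set Λ)).FG := by
    have hle : torsionBySet Λ L (J : Set Λ) ≤ N.localized' Λ S f := by
      intro t ht
      obtain ⟨h, s, rfl⟩ := hsurj t
      rw [mem_torsionBySet_iff] at ht
      obtain ⟨r, hr, hrh⟩ := exists_notMem_forall_smul_eq_zero p (IsNoetherian.noetherian 𝔞)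
        (h := h) fun a ha => by
          have := ht ⟨_, Ideal.mem_map_of_mem (algebraMap R Λ) ha⟩
          simp only at this
          rw [algebraMap_smul, ← IsLocalizedModule.mk'_smul, IsLocalizedModule.mk'_eq_zero'] at this
          obtain ⟨r, hr⟩ := this
          exact ⟨r, r.2, hr⟩
      obtain ⟨r', hr', hrh'⟩ := hK _ hrh
      refine (mem_localized' _ _ _ _ _).2 ⟨_, hrh', (⟨r', hr'⟩ * (⟨r, hr⟩ * s) : S), ?_⟩
      exact (IsLocalizedModule.mk'_cancel_left f (r • h) (⟨r', hr'⟩ : S) _).trans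
        (IsLocalizedModule.mk'_cancel_left f h (⟨r, hr⟩ : S) s)
    refine Submodule.FG.of_le ?_ hle
    rw [localized'_eq_span]
    exact (hN.map f).span
  have hartT : IsArtinian Λ (torsionBySet Λ L (J : Set Λ)) := by
    have := Module.Finite.of_fg hT
    refine isArtinian_of_finite_of_maximalIdeal_pow fun t => ?_
    have hle : IsLocalRing.maximalIdeal Λ ≤
        Ideal.radical (LinearMap.ker (LinearMap.toSpanSingleton Λ L t.1)) := by
      rw [Ideal.radical_eq_sInf]
      refine le_sInf fun Q hQ => ?_
      obtain ⟨hQ, hQp⟩ := hQ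
      let q : PrimeSpectrum R := ⟨Q.comap (algebraMap R Λ), inferInstance⟩
      have hqp : q ≤ p := by
        intro r hr
        by_contra hrp
        exact hQp.ne_top (Q.eq_top_of_isUnit_mem hr
          (IsLocalization.map_units Λ (⟨r, hrp⟩ : S)))
      rcases hqp.eq_or_lt with h | h
      · rw [← Localization.AtPrime.map_eq_maximalIdeal, Ideal.map_le_iff_le_comap]
        exact h.ge
      · obtain ⟨m, s, hm⟩ := hsurj t.1
        obtain ⟨r, hr, hrm⟩ := hsupp q h m
        refine (hr (hQ ?_)).elim
        rw [LinearMap.mem_ker, LinearMap.toSpanSingleton_apply, ← hm, algebraMap_smul,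
          ← IsLocalizedModule.mk'_smul, hrm, IsLocalizedModule.mk'_zero]
    obtain ⟨k, hk⟩ := Ideal.exists_pow_le_of_le_radical_of_fg hle (IsNoetherian.noetherian _)
    exact ⟨k, fun a ha => Subtype.ext (by simpa using hk ha)⟩
  have hart : IsArtinian Λ L := isArtinian_of_torsionBySet J htorL hartT
  obtain ⟨P, k, hP, hPk⟩ := exists_primes_forall_sub_smul_mem J (⊤ : Submodule Λ L)
  refine ⟨P.image (Ideal.comap (algebraMap R Λ)), fun q hq => ?_, fun x hx hxP => ?_⟩
  · obtain ⟨Q, hQ, rfl⟩ := Finset.mem_image.1 hq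
    have := (hP Q hQ).1
    exact ⟨inferInstance, fun h => (hP Q hQ).2 (Ideal.map_le_iff_le_comap.2 h)⟩
  have hTk : (torsionBySet Λ L ((J ^ k : Ideal Λ) : Set Λ)).FG := by
    have := Module.Finite.of_fg hT
    exact Module.Finite.iff_fg.1 (AlmostFinite.finite_of_zero
      (AlmostFinite.torsionBySet_pow (AlmostFinite.of_finite (s := 0)) k))
  obtain ⟨T, hT⟩ := hTk
  choose num den hnd using hsurj
  let N' : Submodule R H := span R ((T.image num : Finset H) : Set H)
  refine ⟨N', ⟨_, rfl⟩, fun h => ?_⟩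
  set G := N' ⊔ LinearMap.range (LinearMap.lsmul R H x) with hG
  have hTG : torsionBySet Λ L ((J ^ k : Ideal Λ) : Set Λ) ≤ G.localized' Λ S f := by
    rw [← hT, span_le]
    intro t ht
    refine (mem_localized' _ _ _ _ _).2 ⟨num t, ?_, den t, hnd t⟩
    exact mem_sup_left (subset_span (by simpa using ⟨t, ht, rfl⟩))
  obtain ⟨c, -, hc⟩ := hPk (algebraMap R Λ x) (Ideal.mem_map_of_mem _ hx)
    (fun Q hQ hxQ => hxP _ (Finset.mem_image_of_mem _ hQ) hxQ) (f h) trivial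
  have hxc : algebraMap R Λ x • c ∈ G.localized' Λ S f := by
    refine (mem_localized' _ _ _ _ _).2 ⟨x • num c, mem_sup_right ⟨num c, rfl⟩, den c, ?_⟩
    rw [IsLocalizedModule.mk'_smul, hnd, algebraMap_smul]
  have hfh : f h ∈ G.localized' Λ S f := by simpa using add_mem (hTG hc) hxc
  obtain ⟨m, hm, s, e⟩ := (mem_localized' _ _ _ _ _).1 hfh
  rw [IsLocalizedModule.mk'_eq_iff, Submonoid.smul_def, ← map_smul,
    IsLocalizedModule.eq_iff_exists S f] at e
  obtain ⟨s', e⟩ := e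
  refine ⟨s' * s, (s' * s).2, ?_⟩
  rw [mul_smul]
  exact e ▸ G.smul_mem _ hm

end Localization

section AlmostCofinite

open Submodule

/-- An `𝔞`-torsion module which is almost finite of level `s + 1` and whose `𝔞`-socle is almost
finite of level `s`. -/
structure AlmostCofinite {R : Type*} [CommRing R] (𝔞 : Ideal R) (s : ℕ) (H : Type*)
    [AddCommGroup H] [Module R H] : Prop where
  torsion : ∀ h : H, ∃ k : ℕ, ∀ a ∈ 𝔞 ^ k, a • h = 0
  almostFinite : AlmostFinite R (s + 1) H
  socle : AlmostFinite R s (torsionBySet R H (𝔞 : Set R))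

theorem Ideal.exists_mem_notMem_of_primes {R : Type*} [CommRing R] {𝔞 J : Ideal R}
    (P : Finset (Ideal R))
    (hP : ∀ q ∈ P, q.IsPrime ∧ ¬ 𝔞 ≤ q) (hJ : ¬ 𝔞 ≤ J) :
    ∃ x ∈ 𝔞, x ∉ J ∧ ∀ q ∈ P, x ∉ q := by
  classical
  by_contra! hcon
  have hsub : (𝔞 : Set R) ⊆
      ⋃ i ∈ ((insert J P : Finset (Ideal R)) : Set (Ideal R)), (i : Set R) := by
    intro x hx
    simp only [Set.mem_iUnion, Finset.mem_coe, Finset.mem_insert, exists_prop]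
    by_cases hxJ : x ∈ J
    · exact ⟨J, Or.inl rfl, hxJ⟩
    · obtain ⟨q, hq, hxq⟩ := hcon x hx hxJ
      exact ⟨q, Or.inr hq, hxq⟩
  obtain ⟨q, hq, hle⟩ := (Ideal.subset_union_prime (f := id) J J fun q hq hqJ _ =>
    (hP q ((Finset.mem_insert.1 hq).resolve_left hqJ)).1).1 hsub
  rcases Finset.mem_insert.1 hq with rfl | hq
  · exact hJ hle
  · exact (hP q hq).2 hle

variable {R : Type*} [CommRing R] [IsNoetherianRing R] {𝔞 : Ideal R} {s : ℕ}

namespace AlmostCofinite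

theorem of_injective {A B : Type*} [AddCommGroup A] [Module R A] [AddCommGroup B] [Module R B]
    (f : A →ₗ[R] B) (hf : Function.Injective f) (hB : AlmostCofinite 𝔞 s B) :
    AlmostCofinite 𝔞 s A where
  torsion h := by
    obtain ⟨k, hk⟩ := hB.torsion (f h)
    exact ⟨k, fun a ha => hf (by rw [map_smul, hk a ha, map_zero])⟩
  almostFinite := AlmostFinite.of_injective f hf hB.almostFinite
  socle := by
    refine AlmostFinite.of_injective (f.restrict fun a ha => ?_) (fun a b h => Subtype.ext
      (hf (congrArg Subtype.val h))) hB.socle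
    rw [mem_torsionBySet_iff] at ha ⊢
    intro r
    rw [← map_smul, ha, map_zero]

theorem exists_primes_almostFinite_quotient {H : Type*} [AddCommGroup H] [Module R H]
    (hH : AlmostCofinite 𝔞 s H) :
    ∃ P : Finset (Ideal R), (∀ q ∈ P, q.IsPrime ∧ ¬ 𝔞 ≤ q) ∧ ∀ x ∈ 𝔞, (∀ q ∈ P, x ∉ q) →
      AlmostFinite R s (H ⧸ LinearMap.range (LinearMap.lsmul R H x)) := by
  classical
  obtain ⟨N, hN, hS⟩ := hH.almostFinite
  let K := torsionBySet R (H ⧸ N) (𝔞 : Set R)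
  have hK : AlmostFinite R s K := by
    have h1 : AlmostFinite R s (K.comap N.mkQ) := by
      have := Module.Finite.of_fg hN
      refine AlmostFinite.of_smul_mem (I := 𝔞) (N := N) AlmostFinite.of_finite hH.socle ?_
      intro h hh a ha
      have : a • N.mkQ h = 0 := (mem_torsionBySet_iff _ _).1 hh ⟨a, ha⟩
      rwa [← map_smul, mkQ_apply, Quotient.mk_eq_zero] at this
    refine AlmostFinite.of_surjective (N.mkQ.restrict (p := K.comap N.mkQ) (q := K) fun _ h => h)
      ?_ h1
    rintro ⟨m, hm⟩
    obtain ⟨h, rfl⟩ := N.mkQ_surjective m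
    exact ⟨⟨h, hm⟩, rfl⟩
  have hsupp (q : PrimeSpectrum R) (hq : ((s + 1 : ℕ) : ℕ∞) ≤ Order.coheight q) (m : H ⧸ N) :
      ∃ r ∉ q.asIdeal, r • m = 0 := by
    obtain ⟨h, rfl⟩ := N.mkQ_surjective m
    obtain ⟨r, hr, hrh⟩ := hS q hq h
    exact ⟨r, hr, by rwa [← map_smul, mkQ_apply, Quotient.mk_eq_zero]⟩
  have htor (m : H ⧸ N) : ∃ k : ℕ, ∀ a ∈ 𝔞 ^ k, a • m = 0 := by
    obtain ⟨h, rfl⟩ := N.mkQ_surjective m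
    obtain ⟨k, hk⟩ := hH.torsion h
    exact ⟨k, fun a ha => by rw [← map_smul, hk a ha, map_zero]⟩
  obtain ⟨N₁, hN₁, hN₁K⟩ := hK
  let Q : Set (PrimeSpectrum R) :=
    {p | Order.coheight p = s ∧ ∃ m : H ⧸ N, ∀ r ∉ p.asIdeal, r • m ≠ 0}
  have hQfin : Q.Finite := by
    refine Set.Finite.of_finite_image ((Ideal.finite_minimalPrimes_of_isNoetherianRing R
      (Module.annihilator R N₁)).subset ?_) (fun p _ q _ h => PrimeSpectrum.ext h)
    rintro _ ⟨p, ⟨hp, m, hm⟩, rfl⟩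
    refine ⟨⟨p.2, fun r hr => ?_⟩, fun q hq hqp => ?_⟩
    · by_contra hrp
      have hK0 (m : H ⧸ N) (hmK : m ∈ K) : ∃ r ∉ p.asIdeal, r • m = 0 := by
        obtain ⟨r', hr', hrm⟩ := hN₁K p hp.ge ⟨m, hmK⟩
        refine ⟨r * r', fun h => (p.2.mem_or_mem h).elim hrp hr', ?_⟩
        have := congrArg (fun z : N₁ => (z.1.1 : H ⧸ N))
          (Module.mem_annihilator.1 hr ⟨_, hrm⟩)
        simpa [mul_smul] using this
      have h0 (k : ℕ) : ∀ m : H ⧸ N, (∀ a ∈ 𝔞 ^ k, a • m = 0) → ∃ r ∉ p.asIdeal, r • m = 0 := by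
        induction k with
        | zero =>
          intro m hm
          exact ⟨1, p.2.one_notMem, hm 1 (by simp)⟩
        | succ k ih =>
          intro m hm
          obtain ⟨r₁, hr₁, h₁⟩ := exists_notMem_forall_smul_eq_zero p
            (IsNoetherian.noetherian 𝔞) (h := m) fun a ha => ih _ fun b hb => by
              rw [smul_smul]
              exact hm _ (by rw [pow_succ]; exact Ideal.mul_mem_mul hb ha)
          obtain ⟨r₂, hr₂, h₂⟩ := hK0 _ h₁
          exact ⟨r₂ * r₁, fun h => (p.2.mem_or_mem h).elim hr₂ hr₁, by rw [mul_smul, h₂]⟩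
      obtain ⟨k, hk⟩ := htor m
      obtain ⟨r', hr', h⟩ := h0 k m hk
      exact hm r' hr' h
    · by_contra hpq
      let q' : PrimeSpectrum R := ⟨q, hq.1⟩
      have hlt : q' < p := lt_of_le_not_ge hqp hpq
      have hcoh : ((s + 1 : ℕ) : ℕ∞) ≤ Order.coheight q' := by
        have := Order.coheight_add_one_le hlt
        rw [hp] at this
        exact_mod_cast this
      obtain ⟨T, hT⟩ := hN₁
      choose r hr hrm using fun t : K => hsupp q' hcoh t
      have : ∏ t ∈ T, r t ∈ Module.annihilator R N₁ := by
        rw [Module.mem_annihilator]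
        have hle : N₁ ≤ torsionBy R K (∏ t ∈ T, r t) := by
          rw [← hT, span_le]
          intro t ht
          refine Subtype.ext ?_
          change (∏ t ∈ T, r t) • (t : H ⧸ N) = 0
          rw [← Finset.prod_erase_mul _ _ ht, mul_smul, hrm, smul_zero]
        exact fun n => Subtype.ext (hle n.2)
      obtain ⟨t, _, ht⟩ := (hq.1.prod_mem_iff).1 (hq.2 this)
      exact hr t ht
  have key (p : PrimeSpectrum R) (hp : p ∈ Q) :=
    exists_primes_forall_exists_fg_atPrime 𝔞 p htor (fun q hq => hsupp q (by
      have := Order.coheight_add_one_le hq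
      rw [hp.1] at this
      exact_mod_cast this)) ⟨N₁.map K.subtype, hN₁.map _, fun m hm => by
        obtain ⟨r, hr, h⟩ := hN₁K p hp.1.ge ⟨m, hm⟩
        exact ⟨r, hr, ⟨_, h, rfl⟩⟩⟩
  choose! P hP hPx using key
  refine ⟨hQfin.toFinset.biUnion P, fun q hq => ?_, fun x hx hxP => ?_⟩
  · obtain ⟨p, hp, hq⟩ := Finset.mem_biUnion.1 hq
    exact hP p (hQfin.mem_toFinset.1 hp) q hq
  have hex (p : PrimeSpectrum R) (hp : p ∈ Q) := hPx p hp x hx fun q hq =>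
    hxP q (Finset.mem_biUnion.2 ⟨p, hQfin.mem_toFinset.2 hp, hq⟩)
  choose! F hF hFx using hex
  have hquot : AlmostFinite R s ((H ⧸ N) ⧸ LinearMap.range (LinearMap.lsmul R (H ⧸ N) x)) := by
    refine ⟨(hQfin.toFinset.sup F).map (mkQ _), Submodule.FG.map _ (fg_finset_sup _ _ fun p hp =>
      hF p (hQfin.mem_toFinset.1 hp)), fun p hp m => ?_⟩
    obtain ⟨m, rfl⟩ := mkQ_surjective _ m
    by_cases hm : ∃ r ∉ p.asIdeal, r • m = 0
    · obtain ⟨r, hr, h⟩ := hm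
      exact ⟨r, hr, by rw [← map_smul, h, map_zero]; exact zero_mem _⟩
    · have hpQ : p ∈ Q := by
        push Not at hm
        refine ⟨le_antisymm ?_ hp, m, hm⟩
        by_contra! hlt
        obtain ⟨r, hr, h⟩ := hsupp p (by
          have := Order.add_one_le_of_lt hlt
          exact_mod_cast this) m
        exact hm r hr h
      obtain ⟨r, hr, h⟩ := hFx p hpQ m
      refine ⟨r, hr, ?_⟩
      obtain ⟨y, hy, z, hz, hyz⟩ := mem_sup.1 h
      refine ⟨y, Finset.le_sup (f := F) (hQfin.mem_toFinset.2 hpQ) hy, ?_⟩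
      rw [← map_smul, ← hyz, map_add, mkQ_apply _ z, (Quotient.mk_eq_zero _).2 hz, add_zero]
  have := Module.Finite.of_fg hN
  refine AlmostFinite.of_exact ((mkQ _).comp N.subtype) (mapQ _ _ N.mkQ ?_) ?_
    (AlmostFinite.of_finite (A := N)) hquot
  · rintro _ ⟨h, rfl⟩
    exact ⟨N.mkQ h, by simp⟩
  · intro m hm
    obtain ⟨h, rfl⟩ := mkQ_surjective _ m
    rw [LinearMap.mem_ker, mkQ_apply, mapQ_apply, Quotient.mk_eq_zero] at hm
    obtain ⟨m', hm'⟩ := hm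
    obtain ⟨h', rfl⟩ := N.mkQ_surjective m'
    have hmem : h - x • h' ∈ N := by
      rw [← Quotient.mk_eq_zero, ← mkQ_apply, map_sub, map_smul, sub_eq_zero]
      exact hm'.symm
    refine ⟨⟨_, hmem⟩, ?_⟩
    rw [LinearMap.comp_apply, subtype_apply, map_sub, sub_eq_self, mkQ_apply,
      Quotient.mk_eq_zero]
    exact ⟨h', rfl⟩

theorem of_surjective {A B : Type v} [AddCommGroup A] [Module R A] [AddCommGroup B] [Module R B]
    (f : A →ₗ[R] B) (hf : Function.Surjective f) (hA : AlmostCofinite 𝔞 s A) :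
    AlmostCofinite 𝔞 s B := by
  have key (J : Ideal R) (hJ : J ≤ 𝔞) : ∀ {A B : Type v} [AddCommGroup A] [Module R A]
      [AddCommGroup B] [Module R B] (f : A →ₗ[R] B), Function.Surjective f →
      AlmostCofinite 𝔞 s A → (∀ x ∈ J, ∀ a : A, x • a = 0) →
      AlmostFinite R s (torsionBySet R B (𝔞 : Set R)) := by
    induction J using WellFoundedGT.induction with
    | ind J ih =>
    intro A B _ _ _ _ f hf hA hJA
    by_cases hJ' : 𝔞 ≤ J
    · have hA' : AlmostFinite R s A := by
        refine AlmostFinite.of_injective (LinearMap.codRestrict (torsionBySet R A (𝔞 : Set R))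
          LinearMap.id fun a => ?_) (fun a b h => congrArg Subtype.val h) hA.socle
        rw [mem_torsionBySet_iff]
        exact fun r => hJA r (hJ' r.2) a
      exact AlmostFinite.of_injective (Submodule.subtype _) (Submodule.subtype_injective _)
        (AlmostFinite.of_surjective f hf hA')
    have hK := hA.of_injective (LinearMap.ker f).subtype (Submodule.subtype_injective _)
    obtain ⟨P, hP, hPx⟩ := hK.exists_primes_almostFinite_quotient
    obtain ⟨x, hx, hxJ, hxP⟩ := Ideal.exists_mem_notMem_of_primes P hP hJ'
    replace hPx := hPx x hx hxP
    let T := torsionBySet R B (𝔞 : Set R)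
    have hlt : J < J ⊔ Ideal.span {x} := lt_of_le_not_ge le_sup_left fun h =>
      hxJ (h (mem_sup_right (mem_span_singleton_self x)))
    let A₁ := torsionBy R A x
    have h1 : AlmostFinite R s (torsionBySet R (A₁.map f) (𝔞 : Set R)) := by
      refine ih _ hlt (sup_le hJ ((Ideal.span_singleton_le_iff_mem _).2 hx))
        (f.submoduleMap A₁) (f.submoduleMap_surjective A₁)
        (hA.of_injective A₁.subtype (Submodule.subtype_injective _)) ?_
      intro r hr a
      obtain ⟨y, hy, z, hz, rfl⟩ := mem_sup.1 hr
      obtain ⟨c, rfl⟩ := Ideal.mem_span_singleton'.1 hz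
      refine Subtype.ext ?_
      change (y + c * x) • (a : A) = 0
      rw [add_smul, hJA y hy, zero_add, mul_smul]
      exact (congrArg (c • ·) a.2).trans (smul_zero c)
    choose σ hσ using fun t : T => hf t
    have hσx (t : T) : x • σ t ∈ LinearMap.ker f := by
      rw [LinearMap.mem_ker, map_smul, hσ]
      exact (mem_torsionBySet_iff _ _).1 t.2 ⟨x, hx⟩
    let g : T →ₗ[R] LinearMap.ker f ⧸ LinearMap.range (LinearMap.lsmul R (LinearMap.ker f) x) :=
      { toFun := fun t => mkQ _ ⟨x • σ t, hσx t⟩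
        map_add' := fun t t' => by
          rw [← sub_eq_zero, ← map_add, ← map_sub, mkQ_apply, Quotient.mk_eq_zero]
          refine ⟨⟨σ (t + t') - (σ t + σ t'), by simp [hσ]⟩, Subtype.ext ?_⟩
          simp [smul_sub]
        map_smul' := fun r t => by
          rw [← sub_eq_zero, RingHom.id_apply, ← map_smul, ← map_sub, mkQ_apply,
            Quotient.mk_eq_zero]
          refine ⟨⟨σ (r • t) - r • σ t, by simp [hσ]⟩, Subtype.ext ?_⟩
          simp [smul_sub, smul_comm r x] }
    refine AlmostFinite.of_exact (f := LinearMap.restrict (A₁.map f).subtype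
      (p := torsionBySet R (A₁.map f) (𝔞 : Set R)) (q := T) fun b hb => ?_) (g := g) ?_ h1 hPx
    · rw [mem_torsionBySet_iff] at hb ⊢
      exact fun r => congrArg Subtype.val (hb r)
    · intro t ht
      rw [LinearMap.mem_ker] at ht
      obtain ⟨k, hk⟩ := (Quotient.mk_eq_zero _).1 ht
      have hk' : x • (k : A) = x • σ t := congrArg Subtype.val hk
      have hmem : (t : B) ∈ A₁.map f := by
        refine ⟨σ t - k, ?_, ?_⟩
        · change x • (σ t - (k : A)) = 0
          rw [smul_sub, hk', sub_self]
        · rw [map_sub, hσ, k.2, sub_zero]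
      refine ⟨⟨⟨t, hmem⟩, ?_⟩, rfl⟩
      rw [mem_torsionBySet_iff]
      exact fun r => Subtype.ext ((mem_torsionBySet_iff _ _).1 t.2 r)
  refine ⟨fun b => ?_, hA.almostFinite.of_surjective f hf, key ⊥ bot_le f hf hA fun x hx a => ?_⟩
  · obtain ⟨a, rfl⟩ := hf b
    obtain ⟨k, hk⟩ := hA.torsion a
    exact ⟨k, fun r hr => by rw [← map_smul, hk r hr, map_zero]⟩
  · rw [(Submodule.mem_bot R).1 hx, zero_smul]

end AlmostCofinite

end AlmostCofinite

section DerivedHom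

open DerivedCategory Pretriangulated Opposite

variable {R : Type u} [CommRing R] [HasDerivedCategory.{w} (ModuleCat.{u} R)]

/-- The module of morphisms of degree `i` from a module to an object of the derived category. -/
abbrev DerivedHom (N : ModuleCat.{u} R) (X : DerivedCategory (ModuleCat.{u} R)) (i : ℤ) :
    Type w :=
  (singleFunctor (ModuleCat.{u} R) 0).obj N ⟶ X⟦i⟧

namespace DerivedHom

variable {N N' : ModuleCat.{u} R} {X Y : DerivedCategory (ModuleCat.{u} R)} {i j : ℤ}

/-- Precomposition with a morphism of modules. -/
noncomputable def precomp (f : N ⟶ N') (X : DerivedCategory (ModuleCat.{u} R)) (i : ℤ) :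
    DerivedHom N' X i →ₗ[R] DerivedHom N X i :=
  Linear.leftComp R _ ((singleFunctor (ModuleCat.{u} R) 0).map f)

theorem precomp_apply (f : N ⟶ N') (e : DerivedHom N' X i) :
    precomp f X i e = (singleFunctor (ModuleCat.{u} R) 0).map f ≫ e := rfl

theorem precomp_comp_apply {N'' : ModuleCat.{u} R} (f : N ⟶ N') (g : N' ⟶ N'')
    (e : DerivedHom N'' X i) : precomp (f ≫ g) X i e = precomp f X i (precomp g X i e) := by
  simp [precomp_apply]

theorem precomp_id_apply (e : DerivedHom N X i) : precomp (𝟙 N) X i e = e := by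
  simp [precomp_apply]

theorem precomp_smul_apply (r : R) (f : N ⟶ N') (e : DerivedHom N' X i) :
    precomp (r • f) X i e = r • precomp f X i e := by
  rw [precomp_apply, Functor.map_smul, Linear.smul_comp, precomp_apply]

theorem precomp_zero_apply (e : DerivedHom N' X i) :
    precomp (0 : N ⟶ N') X i e = 0 := by
  simp [precomp_apply]

theorem precomp_sum_apply {ι : Type*} (s : Finset ι) (f : ι → (N ⟶ N')) (e : DerivedHom N' X i) :
    precomp (∑ a ∈ s, f a) X i e = ∑ a ∈ s, precomp (f a) X i e := by
  simp [precomp_apply, Functor.map_sum, Preadditive.sum_comp]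

theorem smul_eq_zero_of_forall {r : R} (hr : ∀ n : N, r • n = 0) (e : DerivedHom N X i) :
    r • e = 0 := by
  have h : r • 𝟙 N = 0 := by
    ext n
    exact hr n
  rw [← precomp_id_apply e, ← precomp_smul_apply, h, precomp_zero_apply]

theorem exists_precomp_eq {S : ShortComplex (ModuleCat.{u} R)} (hS : S.ShortExact)
    (e : DerivedHom S.X₂ X i) (he : precomp S.f X i e = 0) :
    ∃ e' : DerivedHom S.X₃ X i, precomp S.g X i e' = e := by
  obtain ⟨e', h⟩ := Triangle.yoneda_exact₂ _ hS.singleTriangle_distinguished e he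
  exact ⟨e', h.symm⟩

theorem exists_connecting_of_distinguished {T : Triangle (DerivedCategory (ModuleCat.{u} R))}
    (hT : T ∈ distTriang _) (X : DerivedCategory (ModuleCat.{u} R)) (hij : i + 1 = j) :
    ∃ δ : (T.obj₁ ⟶ X⟦i⟧) →ₗ[R] (T.obj₃ ⟶ X⟦j⟧),
      ∀ e : T.obj₃ ⟶ X⟦j⟧, T.mor₂ ≫ e = 0 → e ∈ LinearMap.range δ := by
  let δ : (T.obj₁ ⟶ X⟦i⟧) →ₗ[R] (T.obj₃ ⟶ X⟦j⟧) :=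
    (Linear.leftComp R _ T.mor₃).comp
      ((Linear.rightComp R _ ((shiftFunctorAdd' _ i 1 j hij).inv.app X)).comp
        ((shiftFunctor (DerivedCategory (ModuleCat.{u} R)) (1 : ℤ)).mapLinearMap R))
  refine ⟨δ, fun e he => ?_⟩
  obtain ⟨e', h⟩ := Triangle.yoneda_exact₃ _ hT e he
  refine ⟨(shiftFunctor (DerivedCategory (ModuleCat.{u} R)) (1 : ℤ)).preimage
    (e' ≫ (shiftFunctorAdd' _ i 1 j hij).hom.app X), ?_⟩
  change T.mor₃ ≫ (shiftFunctor _ (1 : ℤ)).map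
    ((shiftFunctor _ (1 : ℤ)).preimage _) ≫ (shiftFunctorAdd' _ i 1 j hij).inv.app X = e
  rw [CategoryTheory.Functor.map_preimage, Category.assoc, Iso.hom_inv_id_app, h]
  exact congrArg _ (Category.comp_id e')

theorem exists_connecting {S : ShortComplex (ModuleCat.{u} R)} (hS : S.ShortExact)
    (X : DerivedCategory (ModuleCat.{u} R)) (hij : i + 1 = j) :
    ∃ δ : DerivedHom S.X₁ X i →ₗ[R] DerivedHom S.X₃ X j,
      LinearMap.ker (precomp S.g X j) ≤ LinearMap.range δ :=
  exists_connecting_of_distinguished hS.singleTriangle_distinguished X hij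

end DerivedHom

/-- `Z` behaves as a homotopy fiber of multiplication by `x` on `X`. -/
def IsMulFiber (x : R) (X Z : DerivedCategory (ModuleCat.{u} R)) : Prop :=
  ∀ (N : ModuleCat.{u} R) (i j : ℤ), i + 1 = j →
    ∃ (δ : DerivedHom N X i →ₗ[R] DerivedHom N Z j) (ρ : DerivedHom N Z j →ₗ[R] DerivedHom N X j),
      LinearMap.ker δ = LinearMap.range (LinearMap.lsmul R (DerivedHom N X i) x) ∧
      LinearMap.ker ρ = LinearMap.range δ ∧
      LinearMap.range ρ = LinearMap.ker (LinearMap.lsmul R (DerivedHom N X j) x)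

theorem exists_isMulFiber (x : R) (X : DerivedCategory (ModuleCat.{u} R)) :
    ∃ Z, IsMulFiber x X Z := by
  obtain ⟨Z, f, h, hT⟩ := distinguished_cocone_triangle₁ (x • 𝟙 X)
  refine ⟨Z, fun N i j hij => ?_⟩
  let A := (singleFunctor (ModuleCat.{u} R) 0).obj N
  let δ : DerivedHom N X i →ₗ[R] DerivedHom N Z j :=
    Linear.rightComp R _ (h⟦i⟧' ≫ (shiftFunctorAdd' _ 1 i j (by lia)).inv.app Z)
  let ρ : DerivedHom N Z j →ₗ[R] DerivedHom N X j := Linear.rightComp R _ (f⟦j⟧')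
  let F := preadditiveCoyoneda.obj (op A)
  have hmul (k : ℤ) (e : DerivedHom N X k) : e ≫ (x • 𝟙 X)⟦k⟧' = x • e := by
    rw [Functor.map_smul, CategoryTheory.Functor.map_id, Linear.comp_smul, Category.comp_id]
  have h₁ := (ShortComplex.ab_exact_iff_function_exact _).1
    (F.homologySequence_exact₁ _ hT i j hij)
  have h₂ := (ShortComplex.ab_exact_iff_function_exact _).1 (F.homologySequence_exact₂ _ hT j)
  have h₃ := (ShortComplex.ab_exact_iff_function_exact _).1
    (F.homologySequence_exact₃ _ hT i j hij)
  have hδ (e : DerivedHom N X i) : F.homologySequenceδ (Triangle.mk f (x • 𝟙 X) h) i j hij e =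
      δ e :=
    preadditiveCoyoneda_homologySequenceδ_apply (A := op A) (Triangle.mk f (x • 𝟙 X) h) i j hij e
  have h₃' (e : DerivedHom N X i) :
      δ e = 0 ↔ ∃ e' : DerivedHom N X i, e' ≫ (x • 𝟙 X)⟦i⟧' = e := by
    rw [← hδ]
    exact h₃ e
  have h₁' (e : DerivedHom N Z j) : ρ e = 0 ↔ ∃ e' : DerivedHom N X i, δ e' = e := by
    simp only [← hδ]
    exact h₁ e
  have h₂' (e : DerivedHom N X j) :
      e ≫ (x • 𝟙 X)⟦j⟧' = 0 ↔ ∃ e' : DerivedHom N Z j, ρ e' = e := h₂ e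
  refine ⟨δ, ρ, ?_, ?_, ?_⟩
  · ext e
    simp only [hmul] at h₃'
    exact h₃' e
  · ext e
    exact h₁' e
  · ext e
    rw [LinearMap.mem_ker, LinearMap.lsmul_apply, ← hmul]
    exact (h₂' e).symm

end DerivedHom

namespace Module.Finite

variable {R : Type*} [CommRing R] [IsNoetherianRing R]

theorem of_ker_le_range {A B C : Type*} [AddCommGroup A] [Module R A] [AddCommGroup B]
    [Module R B] [AddCommGroup C] [Module R C] [Module.Finite R A] [Module.Finite R C]
    (f : A →ₗ[R] B) (g : B →ₗ[R] C) (hfg : LinearMap.ker g ≤ LinearMap.range f) :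
    Module.Finite R B :=
  AlmostFinite.finite_of_zero (AlmostFinite.of_exact f g hfg AlmostFinite.of_finite
    AlmostFinite.of_finite)

theorem exists_surjective_of_smul_eq_zero {R : Type*} [CommRing R] (I : Ideal R) (N : Type*)
    [AddCommGroup N] [Module R N] [Module.Finite R N] (hN : ∀ a ∈ I, ∀ n : N, a • n = 0) :
    ∃ (c : ℕ) (f : (Fin c → R ⧸ I) →ₗ[R] N), Function.Surjective f := by
  obtain ⟨c, f, hf⟩ := Module.Finite.exists_fin' R N
  let F : (Fin c → R ⧸ I) →ₗ[R] N := ∑ a, (Submodule.liftQ I (LinearMap.toSpanSingleton R N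
    (f (Pi.single a 1))) (fun r hr => hN r hr _)).comp (LinearMap.proj a)
  refine ⟨c, F, fun n => ?_⟩
  obtain ⟨x, rfl⟩ := hf n
  refine ⟨fun a => Ideal.Quotient.mk I (x a), ?_⟩
  have h : F.comp ((LinearMap.compLeft (Submodule.mkQ I) (Fin c))) = f := by
    refine LinearMap.ext fun x => ?_
    conv_rhs => rw [pi_eq_sum_univ' x, map_sum]
    simp only [F, LinearMap.sum_apply, LinearMap.comp_apply]
    refine Finset.sum_congr rfl fun a _ => ?_
    simp only [LinearMap.proj_apply, LinearMap.compLeft_apply, Function.comp_apply,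
      Submodule.mkQ_apply, map_smul]
    rfl
  exact LinearMap.congr_fun h x

end Module.Finite

namespace DerivedHom

open DerivedCategory

variable {R : Type u} [CommRing R] [HasDerivedCategory.{w} (ModuleCat.{u} R)]

section

variable {X : DerivedCategory (ModuleCat.{u} R)} {i j : ℤ}

theorem ker_precomp_le {S : ShortComplex (ModuleCat.{u} R)} (hS : S.ShortExact) :
    LinearMap.ker (precomp S.f X i) ≤ LinearMap.range (precomp S.g X i) :=
  fun e he => exists_precomp_eq hS e he

variable [IsNoetherianRing R]

theorem finite_of_retract {N N' : ModuleCat.{u} R} {ι : Type*} [Fintype ι] (f : ι → (N ⟶ N'))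
    (g : ι → (N' ⟶ N)) (h : 𝟙 N = ∑ a, f a ≫ g a) [Module.Finite R (DerivedHom N' X i)] :
    Module.Finite R (DerivedHom N X i) := by
  refine Module.Finite.of_injective (LinearMap.pi fun a => precomp (g a) X i) ?_
  rw [← LinearMap.ker_eq_bot, eq_bot_iff]
  intro e he
  have he' (a : ι) : precomp (g a) X i e = 0 := congrFun he a
  rw [Submodule.mem_bot, ← precomp_id_apply e, h, precomp_sum_apply]
  exact Finset.sum_eq_zero fun a _ => by rw [precomp_comp_apply, he' a, map_zero]

theorem finite_of_iso {N N' : ModuleCat.{u} R} (φ : N ≅ N') [Module.Finite R (DerivedHom N' X i)] :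
    Module.Finite R (DerivedHom N X i) :=
  finite_of_retract (ι := Unit) (fun _ => φ.hom) (fun _ => φ.inv) (by simp)

theorem finite_fin (N : ModuleCat.{u} R) (n : ℕ) [Module.Finite R (DerivedHom N X i)] :
    Module.Finite R (DerivedHom (ModuleCat.of R (Fin n → N)) X i) := by
  refine finite_of_retract (N' := N) (fun a : Fin n => ModuleCat.ofHom (LinearMap.proj a))
    (fun a => ModuleCat.ofHom (LinearMap.single R (fun _ => N) a)) ?_
  refine ModuleCat.hom_ext (LinearMap.ext fun x => ?_)
  simp [ModuleCat.hom_sum, LinearMap.sum_apply, Finset.univ_sum_single]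

end

variable [IsNoetherianRing R]

/-- All modules of morphisms into `X` of negative degree are zero. -/
def IsNonneg (X : DerivedCategory (ModuleCat.{u} R)) : Prop :=
  ∀ (N : ModuleCat.{u} R) (i : ℤ), i < 0 → Subsingleton (DerivedHom N X i)

variable {X : DerivedCategory (ModuleCat.{u} R)}

theorem finite_of_smul_eq_zero (hX : IsNonneg X) (I : Ideal R) {t : ℤ}
    (h : ∀ i ≤ t, Module.Finite R (DerivedHom (ModuleCat.of R (R ⧸ I)) X i)) {i : ℤ} (hi : i ≤ t)
    (N : ModuleCat.{u} R) [Module.Finite R N] (hN : ∀ a ∈ I, ∀ n : N, a • n = 0) :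
    Module.Finite R (DerivedHom N X i) := by
  suffices H : ∀ (n : ℕ) (i : ℤ), i < n → i ≤ t → ∀ (N : ModuleCat.{u} R) [Module.Finite R N],
      (∀ a ∈ I, ∀ n : N, a • n = 0) → Module.Finite R (DerivedHom N X i) from
    H (i.toNat + 1) i (by lia) hi N hN
  intro n
  induction n with
  | zero =>
    intro i hi _ N _ _
    have := hX N i (by simpa using hi)
    infer_instance
  | succ n ih =>
    intro i hin hit N _ hN
    obtain ⟨c, f, hf⟩ := Module.Finite.exists_surjective_of_smul_eq_zero I N hN
    have hS := LinearMap.shortExact_shortComplexKer hf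
    have := h i hit
    have h₂ : Module.Finite R (DerivedHom f.shortComplexKer.X₂ X i) :=
      finite_fin (ModuleCat.of R (R ⧸ I)) c
    have h₁ : Module.Finite R (DerivedHom f.shortComplexKer.X₁ X (i - 1)) := by
      refine ih (i - 1) (by lia) (by lia) (ModuleCat.of R (LinearMap.ker f)) fun a ha x => ?_
      ext b
      obtain ⟨r, hr⟩ := Ideal.Quotient.mk_surjective (x.1 b)
      simp only [SetLike.val_smul, Pi.smul_apply, ← hr, ZeroMemClass.coe_zero, Pi.zero_apply]
      exact Ideal.Quotient.eq_zero_iff_mem.2 (I.mul_mem_right r ha)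
    obtain ⟨δ, hδ⟩ := exists_connecting hS X (show i - 1 + 1 = i by lia)
    exact Module.Finite.of_ker_le_range δ _ hδ

theorem finite_of_finite_self (hX : IsNonneg X) {t : ℤ}
    (h : ∀ i ≤ t, Module.Finite R (DerivedHom (ModuleCat.of R R) X i)) {i : ℤ} (hi : i ≤ t)
    (N : ModuleCat.{u} R) [Module.Finite R N] : Module.Finite R (DerivedHom N X i) := by
  refine finite_of_smul_eq_zero hX ⊥ (fun j hj => ?_) hi N
    fun a ha n => by rw [(Submodule.mem_bot R).1 ha, zero_smul]
  have := h j hj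
  exact finite_of_iso (Submodule.quotEquivOfEqBot (⊥ : Ideal R) rfl).toModuleIso

theorem finite_of_pow_smul_eq_zero (hX : IsNonneg X) (I : Ideal R) {t : ℤ}
    (h : ∀ i ≤ t, Module.Finite R (DerivedHom (ModuleCat.of R (R ⧸ I)) X i)) {i : ℤ} (hi : i ≤ t)
    (k : ℕ) (N : ModuleCat.{u} R) [Module.Finite R N] (hN : ∀ a ∈ I ^ k, ∀ n : N, a • n = 0) :
    Module.Finite R (DerivedHom N X i) := by
  induction k generalizing N with
  | zero =>
    exact finite_of_smul_eq_zero hX I h hi N fun a _ n => hN a (by simp) n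
  | succ k ih =>
    let f : N →ₗ[R] N ⧸ (I • ⊤ : Submodule R N) := Submodule.mkQ _
    have hS := LinearMap.shortExact_shortComplexKer
        (Submodule.mkQ_surjective _ : Function.Surjective f)
    have h₃ : Module.Finite R (DerivedHom f.shortComplexKer.X₃ X i) := by
      refine finite_of_smul_eq_zero hX I h hi _ fun a ha n => ?_
      obtain ⟨n, rfl⟩ := Submodule.mkQ_surjective _ n
      rw [← map_smul, Submodule.mkQ_apply, Submodule.Quotient.mk_eq_zero]
      exact Submodule.smul_mem_smul ha trivial
    have h₁ : Module.Finite R (DerivedHom f.shortComplexKer.X₁ X i) := by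
      refine ih (ModuleCat.of R (LinearMap.ker f)) fun a ha ⟨n, hn⟩ => Subtype.ext ?_
      have hn' : n ∈ (I • ⊤ : Submodule R N) := by simpa [f] using hn
      change a • n = 0
      refine Submodule.smul_induction_on hn' (fun r hr n _ => ?_) (fun x y hx hy => ?_)
      · rw [smul_smul]
        exact hN _ (by rw [pow_succ]; exact Ideal.mul_mem_mul ha hr) n
      · rw [smul_add, hx, hy, add_zero]
    exact Module.Finite.of_ker_le_range _ _ (ker_precomp_le hS)

theorem finite_self_of_pow_smul_eq_zero (hX : IsNonneg X) (𝔞 : Ideal R) {t : ℤ}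
    (h : ∀ i ≤ t, Module.Finite R (DerivedHom (ModuleCat.of R (R ⧸ 𝔞)) X i))
    (htors : ∀ i ≤ t, ∃ k : ℕ, ∀ a ∈ 𝔞 ^ k, ∀ e : DerivedHom (ModuleCat.of R R) X i, a • e = 0)
    {i : ℤ} (hi : i ≤ t) : Module.Finite R (DerivedHom (ModuleCat.of R R) X i) := by
  suffices H : ∀ (n : ℕ) (i : ℤ), i < n → i ≤ t →
      Module.Finite R (DerivedHom (ModuleCat.of R R) X i) from H (i.toNat + 1) i (by lia) hi
  intro n
  induction n with
  | zero =>
    intro i hi _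
    have := hX (ModuleCat.of R R) i (by simpa using hi)
    infer_instance
  | succ n ih =>
    intro i hin hit
    obtain ⟨k, hk⟩ := htors i hit
    have hlow (N : ModuleCat.{u} R) [Module.Finite R N] :
        Module.Finite R (DerivedHom N X (i - 1)) :=
      finite_of_finite_self (t := i - 1) hX (fun j hj => ih j (by lia) (by lia)) le_rfl N
    let q : R →ₗ[R] R ⧸ 𝔞 ^ k := Submodule.mkQ _
    have hS := LinearMap.shortExact_shortComplexKer
        (Submodule.mkQ_surjective _ : Function.Surjective q)
    have h₃ : Module.Finite R (DerivedHom q.shortComplexKer.X₃ X i) := by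
      refine finite_of_pow_smul_eq_zero hX 𝔞 h hit k _ fun a ha n => ?_
      obtain ⟨n, rfl⟩ := Submodule.mkQ_surjective _ n
      rw [← map_smul, Submodule.mkQ_apply, Submodule.Quotient.mk_eq_zero]
      exact Ideal.mul_mem_right _ _ ha
    obtain ⟨c, p, hp⟩ := Module.Finite.exists_fin' R (LinearMap.ker q)
    have hS' := LinearMap.shortExact_shortComplexKer hp
    obtain ⟨δ, hδ⟩ := exists_connecting hS' X (show i - 1 + 1 = i by lia)
    have h₁ : Module.Finite R (DerivedHom p.shortComplexKer.X₁ X (i - 1)) := hlow _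
    have hcomp (e : DerivedHom (ModuleCat.of R R) X i) :
        precomp (ModuleCat.ofHom p) X i (precomp q.shortComplexKer.f X i e) = 0 := by
      have : ModuleCat.ofHom p ≫ q.shortComplexKer.f =
          ∑ a : Fin c, (p (Pi.single a 1) : R) •
            (ModuleCat.ofHom (LinearMap.proj a) : ModuleCat.of R (Fin c → R) ⟶ ModuleCat.of R R) := by
        ext a
        simp [ModuleCat.hom_sum, Pi.single_apply]
      rw [← precomp_comp_apply, this, precomp_sum_apply]
      refine Finset.sum_eq_zero fun a _ => ?_
      rw [precomp_smul_apply, ← map_smul, hk _ ?_ e, map_zero]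
      simpa [q] using (p (Pi.single a 1)).2
    have hfin : Module.Finite R (LinearMap.range δ) := inferInstance
    refine Module.Finite.of_ker_le_range (precomp q.shortComplexKer.g X i)
      ((precomp q.shortComplexKer.f X i).codRestrict _ fun e => hδ (hcomp e)) ?_
    rw [LinearMap.ker_codRestrict]
    exact ker_precomp_le hS

end DerivedHom

namespace DerivedHom

open DerivedCategory

variable {R : Type u} [CommRing R] [HasDerivedCategory.{w} (ModuleCat.{u} R)]

theorem isNonneg_singleFunctor (M : ModuleCat.{u} R) :
    IsNonneg ((singleFunctor (ModuleCat.{u} R) 0).obj M) := by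
  intro N i hi
  have := TStructure.t.isGE_shift ((singleFunctor (ModuleCat.{u} R) 0).obj M) 0 i (-i)
  exact ⟨fun f g => sub_eq_zero.1 (TStructure.t.zero (f - g) 0 (-i))⟩

/-- In nonnegative degrees, morphisms into a module are extensions. -/
noncomputable def extEquiv (N M : ModuleCat.{u} R) (n : ℕ) :
    DerivedHom N ((singleFunctor (ModuleCat.{u} R) 0).obj M) n ≃ₗ[R] Abelian.Ext N M n :=
  Abelian.Ext.homLinearEquiv.symm

theorem subsingleton_self (M : ModuleCat.{u} R) {i : ℤ} (hi : i ≠ 0) :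
    Subsingleton (DerivedHom (ModuleCat.of R R) ((singleFunctor (ModuleCat.{u} R) 0).obj M) i) := by
  obtain hi' | hi' := lt_or_gt_of_ne hi
  · exact isNonneg_singleFunctor M _ i hi'
  · obtain ⟨n, rfl⟩ : ∃ n : ℕ, i = (n + 1 : ℕ) := ⟨i.toNat - 1, by lia⟩
    have : Subsingleton (Abelian.Ext (ModuleCat.of R R) M (n + 1)) :=
      ⟨fun a b => by rw [a.eq_zero_of_projective, b.eq_zero_of_projective]⟩
    exact (extEquiv (ModuleCat.of R R) M (n + 1)).injective.subsingleton

/-- Morphisms of degree zero from the ring into a module. -/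
noncomputable def selfEquiv (M : ModuleCat.{u} R) :
    DerivedHom (ModuleCat.of R R) ((singleFunctor (ModuleCat.{u} R) 0).obj M) 0 ≃ₗ[R] M :=
  (extEquiv (ModuleCat.of R R) M 0).trans
    (Abelian.Ext.linearEquiv₀.trans
      (ModuleCat.homLinearEquiv.trans (LinearMap.ringLmapEquivSelf R R M)))

end DerivedHom

section KoszulLike

open DerivedHom DerivedCategory

theorem Ideal.exists_pow_smul_eq_zero_of_exact {R : Type*} [CommRing R] [IsNoetherianRing R]
    {A B C : Type*} [AddCommGroup A] [Module R A] [AddCommGroup B] [Module R B] [AddCommGroup C]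
    [Module R C] (I : Ideal R) (f : A →ₗ[R] B) (g : B →ₗ[R] C) (hfg : LinearMap.ker g ≤ LinearMap.range f)
    (hA : ∀ a : A, ∃ k : ℕ, ∀ r ∈ I ^ k, r • a = 0)
    (hC : ∀ c : C, ∃ k : ℕ, ∀ r ∈ I ^ k, r • c = 0) (b : B) :
    ∃ k : ℕ, ∀ r ∈ I ^ k, r • b = 0 := by
  obtain ⟨k, hk⟩ := hC (g b)
  obtain ⟨S, hS⟩ := (IsNoetherian.noetherian (I ^ k) : (I ^ k).FG)
  have h (s : R) : ∃ n : ℕ, s ∈ S → ∀ r ∈ I ^ n, r • s • b = 0 := by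
    by_cases hs : s ∈ S
    · obtain ⟨a, ha⟩ := hfg (show s • b ∈ LinearMap.ker g by
        rw [LinearMap.mem_ker, map_smul, hk s (hS ▸ Submodule.subset_span hs)])
      obtain ⟨n, hn⟩ := hA a
      exact ⟨n, fun _ r hr => by rw [← ha, ← map_smul, hn r hr, map_zero]⟩
    · exact ⟨0, fun h => absurd h hs⟩
  choose n hn using h
  refine ⟨S.sup n + k, fun r hr => ?_⟩
  rw [pow_add] at hr
  refine Submodule.mul_induction_on hr (fun p hp q hq => ?_) fun p q hp hq => by
    rw [add_smul, hp, hq, add_zero]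
  rw [← hS] at hq
  rw [mul_smul]
  refine Submodule.span_induction (fun s hs => ?_) (by simp) (fun s t _ _ hs ht => ?_)
    (fun c s _ hs => ?_) hq
  · exact hn s hs p (Ideal.pow_le_pow_right (Finset.le_sup hs) hp)
  · rw [add_smul, smul_add, hs, ht, add_zero]
  · rw [smul_assoc, smul_comm, hs, smul_zero]

variable {R : Type u} [CommRing R] [HasDerivedCategory.{w} (ModuleCat.{u} R)]

/-- An object arising from an `𝔞`-torsion module by repeatedly taking homotopy fibers of
multiplication by elements of `𝔞`, the ideal `J` acting nilpotently. -/
structure IsKoszulLike (𝔞 : Ideal R) (d : ℕ) (J : Ideal R)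
    (X : DerivedCategory (ModuleCat.{u} R)) : Prop where
  isNonneg : IsNonneg X
  torsion : ∀ i (h : DerivedHom (ModuleCat.of R R) X i), ∃ k : ℕ, ∀ a ∈ 𝔞 ^ k, a • h = 0
  finite : ∀ i < (d : ℤ), Module.Finite R (DerivedHom (ModuleCat.of R (R ⧸ 𝔞)) X i)
  le_radical : ∀ i, J ≤ (Module.annihilator R (DerivedHom (ModuleCat.of R R) X i)).radical

variable {𝔞 J : Ideal R} {d : ℕ} {X Z : DerivedCategory (ModuleCat.{u} R)} {x : R}

theorem IsMulFiber.subsingleton (hZ : IsMulFiber x X Z) (N : ModuleCat.{u} R) {i j : ℤ}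
    (hij : i + 1 = j) (hi : Subsingleton (DerivedHom N X i))
    (hj : Subsingleton (DerivedHom N X j)) : Subsingleton (DerivedHom N Z j) := by
  obtain ⟨δ, ρ, -, hρ, -⟩ := hZ N i j hij
  have h (z : DerivedHom N Z j) : z = 0 := by
    obtain ⟨e, rfl⟩ : z ∈ LinearMap.range δ := hρ ▸ Subsingleton.elim _ _
    rw [Subsingleton.elim e 0, map_zero]
  exact ⟨fun a b => (h a).trans (h b).symm⟩

theorem IsMulFiber.finite_of_fiber (hZ : IsMulFiber x X Z) (N : ModuleCat.{u} R)
    (hx : ∀ n : N, x • n = 0) (j : ℤ) (hj : Module.Finite R (DerivedHom N Z j)) :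
    Module.Finite R (DerivedHom N X j) := by
  obtain ⟨δ, ρ, -, -, h⟩ := hZ N (j - 1) j (by lia)
  refine Module.Finite.of_surjective ρ (LinearMap.range_eq_top.1 (h.trans ?_))
  exact eq_top_iff.2 fun e _ => smul_eq_zero_of_forall hx e

variable [IsNoetherianRing R]

theorem IsMulFiber.finite (hZ : IsMulFiber x X Z) (N : ModuleCat.{u} R) {i j : ℤ}
    (hij : i + 1 = j) (hi : Module.Finite R (DerivedHom N X i))
    (hj : Module.Finite R (DerivedHom N X j)) : Module.Finite R (DerivedHom N Z j) := by
  obtain ⟨δ, ρ, -, hρ, -⟩ := hZ N i j hij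
  exact Module.Finite.of_ker_le_range δ ρ hρ.le

theorem IsKoszulLike.of_isMulFiber (hX : IsKoszulLike 𝔞 d J X)
    (hZ : IsMulFiber x X Z) : IsKoszulLike 𝔞 d (J ⊔ Ideal.span {x}) Z where
  isNonneg N i hi := hZ.subsingleton N (show i - 1 + 1 = i by lia)
    (hX.isNonneg N _ (by lia)) (hX.isNonneg N _ hi)
  torsion i := by
    obtain ⟨δ, ρ, -, hρ, -⟩ := hZ (ModuleCat.of R R) (i - 1) i (by lia)
    exact Ideal.exists_pow_smul_eq_zero_of_exact 𝔞 δ ρ hρ.le (hX.torsion _) (hX.torsion _)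
  finite i hi := hZ.finite _ (show i - 1 + 1 = i by lia) (hX.finite _ (by lia)) (hX.finite _ hi)
  le_radical i := by
    obtain ⟨δ, ρ, hδ, hρ, hρ'⟩ := hZ (ModuleCat.of R R) (i - 1) i (by lia)
    rw [sup_le_iff, Ideal.span_singleton_le_iff_mem]
    constructor
    · intro y hy
      obtain ⟨m, hm⟩ := hX.le_radical (i - 1) hy
      obtain ⟨n, hn⟩ := hX.le_radical i hy
      refine ⟨m + n, Module.mem_annihilator.2 fun z => ?_⟩
      obtain ⟨e, he⟩ : y ^ n • z ∈ LinearMap.range δ := by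
        rw [← hρ, LinearMap.mem_ker, map_smul, Module.mem_annihilator.1 hn]
      rw [pow_add, mul_smul, ← he, ← map_smul, Module.mem_annihilator.1 hm, map_zero]
    · refine ⟨2, Module.mem_annihilator.2 fun z => ?_⟩
      have hz : ρ z ∈ LinearMap.ker (LinearMap.lsmul R (DerivedHom (ModuleCat.of R R) X i) x) :=
        hρ' ▸ LinearMap.mem_range_self ρ z
      obtain ⟨e, he⟩ : x • z ∈ LinearMap.range δ := by
        rw [← hρ, LinearMap.mem_ker, map_smul]
        exact hz
      rw [pow_two, mul_smul, ← he, ← map_smul]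
      exact (hδ ▸ LinearMap.mem_range_self _ e : x • e ∈ LinearMap.ker δ)

theorem IsKoszulLike.finite_self (hX : IsKoszulLike 𝔞 d J X) (hJ : 𝔞 ≤ J) {i : ℤ} (hi : i < d) :
    Module.Finite R (DerivedHom (ModuleCat.of R R) X i) := by
  refine finite_self_of_pow_smul_eq_zero (t := d - 1) hX.isNonneg 𝔞
    (fun j hj => hX.finite j (by lia)) (fun j hj => ?_) (by lia)
  obtain ⟨k, hk⟩ := Ideal.exists_pow_le_of_le_radical_of_fg (hJ.trans (hX.le_radical j))
    (IsNoetherian.noetherian 𝔞)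
  exact ⟨k, fun a ha e => Module.mem_annihilator.1 (hk ha) e⟩

theorem IsKoszulLike.exists_isMulFiber {l : ℕ} (hX : IsKoszulLike 𝔞 d J X)
    (hS : ∀ i : ℕ, i ≤ l → AlmostFinite R (d - i) (DerivedHom (ModuleCat.of R R) X i))
    (hC : ∀ i : ℕ, i < l → i < d →
      AlmostCofinite 𝔞 (d - i - 1) (DerivedHom (ModuleCat.of R R) X i)) (hJ : ¬ 𝔞 ≤ J) :
    ∃ x ∈ 𝔞, ∃ Z, x ∉ J ∧ IsMulFiber x X Z ∧ IsKoszulLike 𝔞 d (J ⊔ Ideal.span {x}) Z ∧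
      ∀ i : ℕ, i ≤ l → AlmostFinite R (d - i) (DerivedHom (ModuleCat.of R R) Z i) := by
  classical
  have hP (i : ℕ) : ∃ P : Finset (Ideal R), (∀ q ∈ P, q.IsPrime ∧ ¬ 𝔞 ≤ q) ∧ ∀ x ∈ 𝔞,
      (∀ q ∈ P, x ∉ q) → i < l → AlmostFinite R (d - i - 1)
        (DerivedHom (ModuleCat.of R R) X i ⧸ LinearMap.range
          (LinearMap.lsmul R (DerivedHom (ModuleCat.of R R) X i) x)) := by
    by_cases hil : i < l
    · by_cases hid : i < d
      · obtain ⟨P, hP, h⟩ := (hC i hil hid).exists_primes_almostFinite_quotient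
        exact ⟨P, hP, fun x hx hxP _ => h x hx hxP⟩
      · refine ⟨∅, by simp, fun x _ _ _ => ?_⟩
        refine AlmostFinite.of_surjective _ (Submodule.mkQ_surjective _) ?_
        have := hS i hil.le
        rwa [Nat.sub_eq_zero_of_le (by lia)] at this ⊢
    · exact ⟨∅, by simp, fun x _ _ h => absurd h hil⟩
  choose P hP hPx using hP
  obtain ⟨x, hx, hxJ, hxP⟩ := Ideal.exists_mem_notMem_of_primes
    ((Finset.range l).biUnion P) (fun q hq => by
      obtain ⟨i, -, hi⟩ := Finset.mem_biUnion.1 hq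
      exact hP i q hi) hJ
  obtain ⟨Z, hZ⟩ := _root_.exists_isMulFiber x X
  refine ⟨x, hx, Z, hxJ, hZ, hX.of_isMulFiber hZ, fun i hi => ?_⟩
  obtain ⟨δ, ρ, hδ, hρ, -⟩ := hZ (ModuleCat.of R R) (i - 1) i (by lia)
  cases i with
  | zero =>
    have := hX.isNonneg (ModuleCat.of R R) (((0 : ℕ) : ℤ) - 1) (by lia)
    exact AlmostFinite.of_exact δ ρ hρ.le AlmostFinite.of_finite (hS 0 hi)
  | succ i =>
    have hi' : ((i + 1 : ℕ) : ℤ) - 1 = i := by lia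
    have hA := hPx i x hx (fun q hq => hxP q (Finset.mem_biUnion.2 ⟨i, by simpa using hi, hq⟩))
      (by lia)
    rw [← hi', ← hδ, Nat.sub_sub] at hA
    refine AlmostFinite.of_exact ((LinearMap.ker δ).liftQ δ le_rfl) ρ ?_ hA (hS (i + 1) hi)
    rw [Submodule.range_liftQ]
    exact hρ.le

theorem IsKoszulLike.almostCofinite (l : ℕ) : ∀ (J : Ideal R)
    (X : DerivedCategory (ModuleCat.{u} R)), IsKoszulLike 𝔞 d J X →
    (∀ i : ℕ, i ≤ l → AlmostFinite R (d - i) (DerivedHom (ModuleCat.of R R) X i)) →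
    l < d → AlmostCofinite 𝔞 (d - l - 1) (DerivedHom (ModuleCat.of R R) X l) := by
  induction l using Nat.strong_induction_on with
  | _ l ih =>
  intro J
  induction J using WellFoundedGT.induction with
  | _ J ihJ =>
  intro X hX hS hl
  refine ⟨hX.torsion l, ?_, ?_⟩
  · have := hS l le_rfl
    rwa [show d - l = d - l - 1 + 1 by lia] at this
  · by_cases hJ : 𝔞 ≤ J
    · have := hX.finite_self hJ (i := l) (by lia)
      exact AlmostFinite.of_finite
    · obtain ⟨x, hx, Z, hxJ, hZ, hZ', hZS⟩ := hX.exists_isMulFiber hS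
        (fun i hil hid => ih i hil J X hX (fun j hj => hS j (by lia)) hid) hJ
      have hlt : J < J ⊔ Ideal.span {x} :=
        lt_of_le_of_ne le_sup_left fun h =>
          hxJ (h ▸ Ideal.mem_sup_right (Ideal.mem_span_singleton_self x))
      have hZl := ihJ _ hlt Z hZ' hZS hl
      obtain ⟨δ, ρ, -, -, hρ⟩ := hZ (ModuleCat.of R R) (l - 1) l (by lia)
      have hK := AlmostCofinite.of_surjective ρ.rangeRestrict ρ.surjective_rangeRestrict hZl
      have hle (e : Submodule.torsionBySet R (DerivedHom (ModuleCat.of R R) X l) (𝔞 : Set R)) :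
          e.1 ∈ LinearMap.range ρ := by
        rw [hρ, LinearMap.mem_ker]
        exact (Submodule.mem_torsionBySet_iff _ _).1 e.2 ⟨x, hx⟩
      let f : Submodule.torsionBySet R (DerivedHom (ModuleCat.of R R) X l) (𝔞 : Set R) →ₗ[R]
          Submodule.torsionBySet R (LinearMap.range ρ) (𝔞 : Set R) :=
        ((Submodule.subtype _).codRestrict _ hle).codRestrict _ fun e =>
          (Submodule.mem_torsionBySet_iff _ _).2 fun a => Subtype.ext
            ((Submodule.mem_torsionBySet_iff _ _).1 e.2 a)
      refine AlmostFinite.of_injective f (fun a b hab => Subtype.ext ?_) hK.socle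
      exact congrArg (fun e => e.1.1) hab

theorem IsKoszulLike.finite_of_le_of_finite_self (hX : IsKoszulLike 𝔞 d J X) (hJ : 𝔞 ≤ J) {t : ℤ}
    (h : ∀ i ≤ t, (d : ℤ) ≤ i → Module.Finite R (DerivedHom (ModuleCat.of R R) X i)) {i : ℤ}
    (hi : i ≤ t) : Module.Finite R (DerivedHom (ModuleCat.of R (R ⧸ 𝔞)) X i) := by
  refine finite_of_finite_self hX.isNonneg (fun j hj => ?_) hi _
  by_cases hjd : j < d
  · exact hX.finite_self hJ hjd
  · exact h j hj (by lia)

theorem IsKoszulLike.finite_of_almostFinite (l : ℕ) (J : Ideal R) :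
    ∀ (X : DerivedCategory (ModuleCat.{u} R)), IsKoszulLike 𝔞 d J X →
    (∀ i : ℕ, i ≤ l → AlmostFinite R (d - i) (DerivedHom (ModuleCat.of R R) X i)) →
    ∀ i : ℤ, i ≤ l → Module.Finite R (DerivedHom (ModuleCat.of R (R ⧸ 𝔞)) X i) := by
  induction J using WellFoundedGT.induction with
  | _ J ihJ =>
  intro X hX hS i hi
  by_cases hJ : 𝔞 ≤ J
  · refine hX.finite_of_le_of_finite_self hJ (t := l) (fun j hj hjd => ?_) hi
    obtain ⟨j, rfl⟩ : ∃ n : ℕ, j = n := ⟨j.toNat, by lia⟩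
    have := hS j (by lia)
    rw [Nat.sub_eq_zero_of_le (by lia)] at this
    exact this.finite_of_zero
  · obtain ⟨x, hx, Z, hxJ, hZ, hZ', hZS⟩ := hX.exists_isMulFiber hS
      (fun i hil hid => hX.almostCofinite i J X (fun j hj => hS j (by lia)) hid) hJ
    have hlt : J < J ⊔ Ideal.span {x} :=
      lt_of_le_of_ne le_sup_left fun h =>
        hxJ (h ▸ Ideal.mem_sup_right (Ideal.mem_span_singleton_self x))
    refine hZ.finite_of_fiber _ (fun n => ?_) i (ihJ _ hlt Z hZ' hZS i hi)
    obtain ⟨n, rfl⟩ := Submodule.mkQ_surjective _ n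
    rw [← map_smul, Submodule.mkQ_apply, Submodule.Quotient.mk_eq_zero]
    exact Ideal.mul_mem_right _ _ hx

theorem IsKoszulLike.finite_of_list (S : List R) : ∀ (s : ℤ) (J : Ideal R)
    (X : DerivedCategory (ModuleCat.{u} R)), IsKoszulLike 𝔞 d J X →
    (∀ i > s, Subsingleton (DerivedHom (ModuleCat.of R R) X i)) → s + S.length < d →
    (∀ x ∈ S, x ∈ 𝔞) → 𝔞 ≤ J ⊔ Ideal.span {x | x ∈ S} →
    ∀ i, Module.Finite R (DerivedHom (ModuleCat.of R (R ⧸ 𝔞)) X i) := by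
  induction S with
  | nil =>
    intro s J X hX hs hsd _ hJ i
    refine hX.finite_of_le_of_finite_self (by simpa using hJ) (t := i) (fun j _ hj => ?_) le_rfl
    have := hs j (by simp at hsd; lia)
    infer_instance
  | cons x S ih =>
    intro s J X hX hs hsd hS hJ i
    obtain ⟨Z, hZ⟩ := _root_.exists_isMulFiber x X
    have hx : x ∈ 𝔞 := hS x (by simp)
    refine hZ.finite_of_fiber _ (fun n => ?_) i (ih (s + 1) (J ⊔ Ideal.span {x}) Z
      (hX.of_isMulFiber hZ) (fun j hj => ?_) ?_ (fun y hy => hS y (by simp [hy])) ?_ i)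
    · obtain ⟨n, rfl⟩ := Submodule.mkQ_surjective _ n
      rw [← map_smul, Submodule.mkQ_apply, Submodule.Quotient.mk_eq_zero]
      exact Ideal.mul_mem_right _ _ hx
    · exact hZ.subsingleton _ (show j - 1 + 1 = j by lia) (hs _ (by lia)) (hs _ (by lia))
    · simp only [List.length_cons] at hsd
      lia
    · rw [sup_assoc, ← Ideal.span_union]
      convert hJ using 3
      ext y
      simp

end KoszulLike

section

variable {R : Type*} [CommRing R]

theorem PrimeSpectrum.mem_minimalPrimes_of_le_coheight {d : ℕ} (hR : ringKrullDim R = d)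
    (p : PrimeSpectrum R) (hp : (d : ℕ∞) ≤ Order.coheight p) : p.asIdeal ∈ minimalPrimes R := by
  refine ⟨⟨p.2, bot_le⟩, fun q hq hqp => ?_⟩
  by_contra hpq
  have hlt : (⟨q, hq.1⟩ : PrimeSpectrum R) < p := lt_of_le_not_ge hqp hpq
  have h₁ := Order.coheight_le_krullDim (⟨q, hq.1⟩ : PrimeSpectrum R)
  have h₂ := (add_le_add_left hp 1).trans (Order.coheight_add_one_le hlt)
  rw [← ringKrullDim, hR] at h₁
  have h₃ : ((d : ℕ∞) + 1) ≤ d := h₂.trans (by exact_mod_cast h₁)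
  exact absurd h₃ (by exact_mod_cast Nat.not_succ_le_self d)

theorem PrimeSpectrum.coheight_le_ringKrullDim_quotient {𝔞 : Ideal R} (p : PrimeSpectrum R)
    (hp : 𝔞 ≤ p.asIdeal) : (Order.coheight p : WithBot ℕ∞) ≤ ringKrullDim (R ⧸ 𝔞) := by
  rw [Order.coheight_eq_krullDim_Ici, ringKrullDim_quotient]
  exact Order.krullDim_le_of_strictMono
    (fun q : Set.Ici p => (⟨q.1, hp.trans q.2⟩ : PrimeSpectrum.zeroLocus (𝔞 : Set R)))
    fun a b h => h

variable {𝔞 : Ideal R} {d : ℕ} {M : Type*} [AddCommGroup M] [Module R M]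

theorem AlmostFinite.of_ringKrullDim_quotient (hd : 1 ≤ d)
    (hR : ringKrullDim (R ⧸ 𝔞) = (d - 1 : ℕ)) (hM : ∀ m : M, ∃ k : ℕ, ∀ a ∈ 𝔞 ^ k, a • m = 0) :
    AlmostFinite R d M := by
  refine ⟨⊥, Submodule.fg_bot, fun p hp m => ?_⟩
  by_cases h : 𝔞 ≤ p.asIdeal
  · have h₁ := PrimeSpectrum.coheight_le_ringKrullDim_quotient p h
    rw [hR] at h₁
    have h₂ : (d : ℕ∞) ≤ (d - 1 : ℕ) := hp.trans (WithBot.coe_le_coe.1 h₁)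
    have h₃ : d ≤ d - 1 := by exact_mod_cast h₂
    lia
  · obtain ⟨k, hk⟩ := hM m
    obtain ⟨r, hr, hrp⟩ := SetLike.not_le_iff_exists.1 h
    exact ⟨r ^ k, fun h => hrp (p.2.mem_of_pow_mem k h), hk _ (Ideal.pow_mem_pow hr k)⟩

variable [IsNoetherianRing R]

theorem Ideal.exists_notMem_mul_pow_eq_zero_of_mem_minimalPrimes {p : Ideal R}
    (hp : p ∈ minimalPrimes R) : ∃ n : ℕ, ∃ r ∉ p, ∀ a ∈ p ^ n, r * a = 0 := by
  classical
  have := hp.isPrime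
  obtain ⟨n, hn⟩ := (⊥ : Ideal R).exists_radical_pow_le_of_fg
    (⊥ : Ideal R).radical.fg_of_isNoetherianRing
  have h := (⊥ : Ideal R).finite_minimalPrimes_of_isNoetherianRing R
  rw [← (⊥ : Ideal R).sInf_minimalPrimes, ← h.coe_toFinset, ← h.toFinset.inf_id_eq_sInf,
    ← Finset.insert_erase (h.mem_toFinset.mpr hp), Finset.inf_insert, id_eq] at hn
  grw [← Ideal.mul_le_inf, mul_pow] at hn
  have hJ : ¬ ((h.toFinset.erase p).inf id) ^ n ≤ p := by
    intro hle
    obtain ⟨K, hK, hKp⟩ := (hp.isPrime.inf_le').1 (hp.isPrime.le_of_pow_le hle)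
    rw [Finset.mem_erase, Set.Finite.mem_toFinset] at hK
    exact hK.1 (le_antisymm hKp (hp.2 hK.2.1 hKp))
  obtain ⟨r, hr, hrp⟩ := SetLike.not_le_iff_exists.1 hJ
  exact ⟨n, r, hrp, fun a ha => by
    rw [mul_comm]; exact (Submodule.mem_bot R).1 (hn (Ideal.mul_mem_mul ha hr))⟩

theorem AlmostFinite.of_ringKrullDim (hR : ringKrullDim R = d)
    (hM : ∀ m : M, ∃ k : ℕ, ∀ a ∈ 𝔞 ^ k, a • m = 0)
    (hT : Module.Finite R (Submodule.torsionBySet R M (𝔞 : Set R))) : AlmostFinite R d M := by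
  have hfin := (⊥ : Ideal R).finite_minimalPrimes_of_isNoetherianRing R
  have hmin (p : Ideal R) : ∃ n : ℕ, p ∈ (⊥ : Ideal R).minimalPrimes →
      ∃ r ∉ p, ∀ a ∈ p ^ n, r * a = 0 := by
    by_cases hp : p ∈ (⊥ : Ideal R).minimalPrimes
    · obtain ⟨n, h⟩ := Ideal.exists_notMem_mul_pow_eq_zero_of_mem_minimalPrimes hp
      exact ⟨n, fun _ => h⟩
    · exact ⟨0, fun h => absurd h hp⟩
  choose n hn using hmin
  let k := hfin.toFinset.sup n
  refine ⟨Submodule.torsionBySet R M ((𝔞 ^ k : Ideal R) : Set R), ?_, fun p hp m => ?_⟩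
  · exact Module.Finite.iff_fg.1
      (AlmostFinite.torsionBySet_pow (s := 0) AlmostFinite.of_finite k).finite_of_zero
  · by_cases h : 𝔞 ≤ p.asIdeal
    · have hpm := PrimeSpectrum.mem_minimalPrimes_of_le_coheight hR p hp
      obtain ⟨r, hr, hra⟩ := hn p.asIdeal hpm
      refine ⟨r, hr, (Submodule.mem_torsionBySet_iff _ _).2 fun ⟨a, ha⟩ => ?_⟩
      have hle : n p.asIdeal ≤ k := Finset.le_sup (f := n) (hfin.mem_toFinset.2 hpm)
      change a • r • m = 0
      rw [smul_smul, mul_comm, hra a (Ideal.pow_right_mono h _ (Ideal.pow_le_pow_right hle ha)),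
        zero_smul]
    · obtain ⟨j, hj⟩ := hM m
      obtain ⟨r, hr, hrp⟩ := SetLike.not_le_iff_exists.1 h
      refine ⟨r ^ j, fun h => hrp (p.2.mem_of_pow_mem j h), ?_⟩
      rw [hj _ (Ideal.pow_mem_pow hr j)]
      exact zero_mem _

end

section

variable {R : Type u} [CommRing R] {𝔞 : Ideal R}

theorem isKoszulLike_singleFunctor [HasDerivedCategory.{w} (ModuleCat.{u} R)] (d : ℕ)
    (M : ModuleCat.{u} R)
    (hM : ∀ m : M, ∃ k : ℕ, ∀ a ∈ 𝔞 ^ k, a • m = 0)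
    (h : ∀ i < d, Module.Finite R (Abelian.Ext (ModuleCat.of R (R ⧸ 𝔞)) M i)) :
    IsKoszulLike 𝔞 d ⊥ ((DerivedCategory.singleFunctor (ModuleCat.{u} R) 0).obj M) where
  isNonneg := DerivedHom.isNonneg_singleFunctor M
  torsion i e := by
    by_cases hi : i = 0
    · subst hi
      obtain ⟨k, hk⟩ := hM (DerivedHom.selfEquiv M e)
      exact ⟨k, fun a ha => (DerivedHom.selfEquiv M).injective
        (by rw [map_smul, hk a ha, map_zero])⟩
    · have := DerivedHom.subsingleton_self M hi
      exact ⟨0, fun _ _ => Subsingleton.elim _ _⟩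
  finite i hi := by
    by_cases hi' : i < 0
    · have := DerivedHom.isNonneg_singleFunctor M (ModuleCat.of R (R ⧸ 𝔞)) i hi'
      infer_instance
    · obtain ⟨n, rfl⟩ : ∃ n : ℕ, i = n := ⟨i.toNat, by lia⟩
      have := h n (by lia)
      exact Module.Finite.equiv (DerivedHom.extEquiv (ModuleCat.of R (R ⧸ 𝔞)) M n).symm
  le_radical i := bot_le

variable [IsNoetherianRing R]

theorem finite_torsionBySet_of_finite_hom (M : ModuleCat.{u} R)
    (h : Module.Finite R (Abelian.Ext (ModuleCat.of R (R ⧸ 𝔞)) M 0)) :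
    Module.Finite R (Submodule.torsionBySet R M (𝔞 : Set R)) := by
  have h' : Module.Finite R ((R ⧸ 𝔞) →ₗ[R] M) :=
    Module.Finite.equiv (Abelian.Ext.linearEquiv₀.trans
      (ModuleCat.homLinearEquiv (S := R) (M := ModuleCat.of R (R ⧸ 𝔞)) (N := M)))
  let f : ((R ⧸ 𝔞) →ₗ[R] M) →ₗ[R] M := LinearMap.applyₗ (Ideal.Quotient.mk 𝔞 1)
  have hle : Submodule.torsionBySet R M (𝔞 : Set R) ≤ LinearMap.range f := by
    intro m hm
    refine ⟨Submodule.liftQ 𝔞 (LinearMap.toSpanSingleton R M m) fun a ha =>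
      (Submodule.mem_torsionBySet_iff _ _).1 hm ⟨a, ha⟩, ?_⟩
    exact one_smul R m
  exact Module.Finite.of_injective (Submodule.inclusion hle) (Submodule.inclusion_injective hle)

theorem AlmostFinite.finite_ext {d : ℕ} (M : ModuleCat.{u} R) (hMd : AlmostFinite R d M)
    (hM : ∀ m : M, ∃ k : ℕ, ∀ a ∈ 𝔞 ^ k, a • m = 0)
    (h : ∀ i < d, Module.Finite R (Abelian.Ext (ModuleCat.of R (R ⧸ 𝔞)) M i)) (n : ℕ) :
    Module.Finite R (Abelian.Ext (ModuleCat.of R (R ⧸ 𝔞)) M n) := by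
  let := HasDerivedCategory.standard (ModuleCat.{u} R)
  have := (isKoszulLike_singleFunctor d M hM h).finite_of_almostFinite n ⊥ _ (fun i _ => by
    by_cases hi : (i : ℤ) = 0
    · obtain rfl : i = 0 := by lia
      exact AlmostFinite.of_injective _ (DerivedHom.selfEquiv M).injective hMd
    · have := DerivedHom.subsingleton_self M hi
      exact AlmostFinite.of_finite) n le_rfl
  exact Module.Finite.equiv (DerivedHom.extEquiv (ModuleCat.of R (R ⧸ 𝔞)) M n)

theorem finite_ext_of_le_radical {I J : Ideal R} (hIJ : I ≤ J.radical) (M : ModuleCat.{u} R)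
    {t : ℕ} (h : ∀ i < t, Module.Finite R (Abelian.Ext (ModuleCat.of R (R ⧸ I)) M i)) {n : ℕ}
    (hn : n < t) : Module.Finite R (Abelian.Ext (ModuleCat.of R (R ⧸ J)) M n) := by
  let := HasDerivedCategory.standard (ModuleCat.{u} R)
  obtain ⟨k, hk⟩ := Ideal.exists_pow_le_of_le_radical_of_fg hIJ I.fg_of_isNoetherianRing
  have h' : ∀ i ≤ (n : ℤ), Module.Finite R (DerivedHom (ModuleCat.of R (R ⧸ I))
      ((DerivedCategory.singleFunctor (ModuleCat.{u} R) 0).obj M) i) := by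
    intro i hi
    by_cases hi' : i < 0
    · have := DerivedHom.isNonneg_singleFunctor M (ModuleCat.of R (R ⧸ I)) i hi'
      infer_instance
    · obtain ⟨m, rfl⟩ : ∃ m : ℕ, i = m := ⟨i.toNat, by lia⟩
      have := h m (by lia)
      exact Module.Finite.equiv (DerivedHom.extEquiv (ModuleCat.of R (R ⧸ I)) M m).symm
  have := DerivedHom.finite_of_pow_smul_eq_zero (DerivedHom.isNonneg_singleFunctor M) I h' le_rfl k
    (ModuleCat.of R (R ⧸ J)) fun a ha m => by
      obtain ⟨m, rfl⟩ := Submodule.mkQ_surjective _ m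
      rw [← map_smul, Submodule.mkQ_apply, Submodule.Quotient.mk_eq_zero]
      exact Ideal.mul_mem_right _ _ (hk ha)
  exact Module.Finite.equiv (DerivedHom.extEquiv (ModuleCat.of R (R ⧸ J)) M n)

end

namespace CategoryTheory.ProjectiveResolution

open Abelian CochainComplex HomComplex

variable {C : Type*} [Category* C] [Abelian C] [HasExt.{w} C] {X Y : C}
  (P : ProjectiveResolution X)

theorem smul_extMk {R : Type*} [Ring R] [Linear R C] {n : ℕ} (r : R) (f : P.complex.X n ⟶ Y)
    (m : ℕ) (hm : n + 1 = m) (hf : P.complex.d m n ≫ f = 0) :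
    r • P.extMk f m hm hf = P.extMk (r • f) m hm (by simp [hf]) := by
  rw [Ext.smul_eq_comp_mk₀, P.extMk_comp_mk₀]
  congr 1
  simp

theorem extMk_eq_zero_iff_eq_zero (f : P.complex.X 0 ⟶ Y) (m : ℕ) (hm : 0 + 1 = m)
    (hf : P.complex.d m 0 ≫ f = 0) : P.extMk f m hm hf = 0 ↔ f = 0 := by
  refine ⟨fun h => ?_, fun h => by subst h; simp⟩
  rw [← P.extEquivCohomologyClass.apply_eq_iff_eq, extEquivCohomologyClass_extMk,
    extEquivCohomologyClass_zero, CohomologyClass.mk_eq_zero_iff,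
    Cocycle.toSingleMk_mem_coboundaries_iff _ _ _ _ _ 1 (by lia)] at h
  obtain ⟨g, hg⟩ := h
  have h₁ : Limits.IsZero (P.cochainComplex.X 1) :=
    P.complex.isZero_extend_X ComplexShape.embeddingDownNat 1 fun i hi => by
      simp at hi
      lia
  rw [h₁.eq_of_src g 0, Limits.comp_zero] at hg
  rw [← cancel_epi (P.cochainComplexXIso (-(0 : ℕ)) 0 rfl).hom, Limits.comp_zero, ← hg]

theorem extMk_eq_zero_iff_prev {n : ℕ} (f : P.complex.X n ⟶ Y) (m : ℕ) (hm : n + 1 = m)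
    (hf : P.complex.d m n ≫ f = 0) : P.extMk f m hm hf = 0 ↔
      ∃ g : P.complex.X ((ComplexShape.up ℕ).prev n) ⟶ Y, P.complex.d n _ ≫ g = f := by
  cases n with
  | zero =>
    rw [extMk_eq_zero_iff_eq_zero, P.complex.shape _ _ (by simp)]
    simp [eq_comm]
  | succ p =>
    rw [P.extMk_eq_zero_iff _ _ _ _ ((ComplexShape.up ℕ).prev (p + 1)) (by simp)]

end CategoryTheory.ProjectiveResolution

theorem CategoryTheory.Abelian.Ext.finite_extObj_iff {R : Type u} [CommRing R]
    (N M : ModuleCat.{u} R) (n : ℕ) :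
    Module.Finite R (extObj N M n) ↔ Module.Finite R (Abelian.Ext N M n) := by
  let P := projectiveResolution N
  let S := (P.complex.linearYonedaObj R M).sc n
  let m := (ComplexShape.up ℕ).next n
  have hm : n + 1 = m := (CochainComplex.next ℕ n).symm
  have hker (f : LinearMap.ker S.g.hom) : P.complex.d m n ≫ (f.1 : P.complex.X n ⟶ M) = 0 := f.2
  let φ : LinearMap.ker S.g.hom →ₗ[R] Abelian.Ext N M n :=
    { toFun f := P.extMk f.1 m hm (hker f)
      map_add' f g := (P.add_extMk _ _ m hm (hker f) (hker g)).symm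
      map_smul' r f := (P.smul_extMk r _ m hm (hker f)).symm }
  have hφ : Function.Surjective φ := fun e => by
    obtain ⟨f, hf, rfl⟩ := P.extMk_surjective e m hm
    exact ⟨⟨f, hf⟩, rfl⟩
  have hφ' : LinearMap.range S.moduleCatToCycles = LinearMap.ker φ := by
    ext f
    refine Iff.trans ⟨?_, ?_⟩ (P.extMk_eq_zero_iff_prev f.1 m hm (hker f)).symm
    · rintro ⟨g, rfl⟩
      exact ⟨g, rfl⟩
    · rintro ⟨g, hg⟩
      exact ⟨g, Subtype.ext hg⟩
  have e : extObj N M n ≃ₗ[R] Abelian.Ext N M n :=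
    ((P.isoExt n M).toLinearEquiv.trans S.moduleCatHomologyIso.toLinearEquiv).trans
      ((Submodule.quotEquivOfEq _ _ hφ').trans (φ.quotKerEquivOfSurjective hφ))
  exact ⟨fun _ => Module.Finite.equiv e, fun _ => Module.Finite.equiv e.symm⟩

section

variable {R : Type u} [CommRing R] [IsNoetherianRing R] {𝔞 : Ideal R}

theorem support_subset_zeroLocus_iff_isTorsionIdeal (M : Type u) [AddCommGroup M] [Module R M] :
    Module.support R M ⊆ PrimeSpectrum.zeroLocus (𝔞 : Set R) ↔ IsTorsionIdeal 𝔞 M := by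
  refine ⟨fun h m => ?_, fun h p hp => ?_⟩
  · have hle : 𝔞 ≤ (Submodule.span R {m}).annihilator.radical := by
      rw [Ideal.radical_eq_sInf]
      refine le_sInf fun p hp => ?_
      exact h (a := ⟨p, hp.2⟩) (Module.mem_support_iff_exists_annihilator.2 ⟨m, hp.1⟩)
    obtain ⟨n, hn⟩ := Ideal.exists_pow_le_of_le_radical_of_fg hle 𝔞.fg_of_isNoetherianRing
    exact ⟨n, fun a ha => (Submodule.mem_annihilator_span_singleton m a).1 (hn ha)⟩
  · obtain ⟨m, hm⟩ := Module.mem_support_iff_exists_annihilator.1 hp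
    obtain ⟨n, hn⟩ := h m
    refine p.2.le_of_pow_le (n := n) fun a ha => hm ?_
    exact (Submodule.mem_annihilator_span_singleton m a).2 (hn a ha)

theorem isCofinite_iff (M : ModuleCat.{u} R) :
    IsCofinite 𝔞 M ↔ IsTorsionIdeal 𝔞 M ∧
      ∀ n, Module.Finite R (Abelian.Ext (ModuleCat.of R (R ⧸ 𝔞)) M n) := by
  rw [IsCofinite, support_subset_zeroLocus_iff_isTorsionIdeal]
  exact and_congr_right' (forall_congr' fun n => Abelian.Ext.finite_extObj_iff _ M n)

variable (𝔞) in
theorem exists_radical_span_range_eq :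
    ∃ f : Fin (arithRank 𝔞) → R, (Ideal.span (Set.range f)).radical = 𝔞.radical := by
  refine Nat.sInf_mem (s := {n : ℕ | ∃ f : Fin n → R,
    (Ideal.span (Set.range f)).radical = 𝔞.radical}) ?_
  obtain ⟨n, f, hf⟩ := Submodule.fg_iff_exists_fin_generating_family.1 𝔞.fg_of_isNoetherianRing
  exact ⟨n, f, congrArg Ideal.radical hf⟩

theorem IsTorsionIdeal.of_le_radical {I J : Ideal R} (hJI : J ≤ I.radical) {M : Type u}
    [AddCommGroup M] [Module R M] (hM : IsTorsionIdeal I M) : IsTorsionIdeal J M := by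
  obtain ⟨k, hk⟩ := Ideal.exists_pow_le_of_le_radical_of_fg hJI J.fg_of_isNoetherianRing
  intro m
  obtain ⟨n, hn⟩ := hM m
  exact ⟨k * n, fun a ha => hn a (Ideal.pow_right_mono hk n (pow_mul J k n ▸ ha))⟩

theorem finite_ext_of_arithRank_lt {d : ℕ} (hd : arithRank 𝔞 < d) (M : ModuleCat.{u} R)
    (hM : IsTorsionIdeal 𝔞 M)
    (h : ∀ i < d, Module.Finite R (Abelian.Ext (ModuleCat.of R (R ⧸ 𝔞)) M i)) (n : ℕ) :
    Module.Finite R (Abelian.Ext (ModuleCat.of R (R ⧸ 𝔞)) M n) := by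
  obtain ⟨f, hf⟩ := exists_radical_span_range_eq 𝔞
  set I := Ideal.span (Set.range f)
  have h₁ : I ≤ 𝔞.radical := hf ▸ Ideal.le_radical
  have h₂ : 𝔞 ≤ I.radical := hf ▸ Ideal.le_radical
  let := HasDerivedCategory.standard (ModuleCat.{u} R)
  have hI := isKoszulLike_singleFunctor d M (hM.of_le_radical h₁)
    fun i hi => finite_ext_of_le_radical h₂ M h hi
  have hfin := hI.finite_of_list (List.ofFn f) 0 ⊥ _
    (fun i hi => DerivedHom.subsingleton_self M hi.ne') (by simpa using hd)
    (fun x hx => Ideal.subset_span (by simpa using hx)) (by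
      rw [bot_sup_eq]
      exact Ideal.span_mono fun x hx => by simpa using hx)
  refine finite_ext_of_le_radical (t := n + 1) h₁ M (fun i _ => ?_) n.lt_succ_self
  have := hfin i
  exact Module.Finite.equiv (DerivedHom.extEquiv (ModuleCat.of R (R ⧸ I)) M i)

theorem IsTorsionIdeal.finite_ext {d : ℕ} (hd : 1 ≤ d)
    (hcase : ringKrullDim R = d ∨ ringKrullDim (R ⧸ 𝔞) = (d - 1 : ℕ) ∨ arithRank 𝔞 = d - 1)
    {M : ModuleCat.{u} R} (hM : IsTorsionIdeal 𝔞 M)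
    (h : ∀ i < d, Module.Finite R (Abelian.Ext (ModuleCat.of R (R ⧸ 𝔞)) M i)) (n : ℕ) :
    Module.Finite R (Abelian.Ext (ModuleCat.of R (R ⧸ 𝔞)) M n) := by
  obtain hR | hR | hR := hcase
  · exact AlmostFinite.finite_ext M (.of_ringKrullDim hR hM
      (finite_torsionBySet_of_finite_hom M (h 0 hd))) hM h n
  · exact AlmostFinite.finite_ext M (.of_ringKrullDim_quotient hd hR hM) hM h n
  · exact finite_ext_of_arithRank_lt (by lia) M hM h n

end

section

variable {R : Type u} [CommRing R] {𝔞 : Ideal R}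

theorem IsTorsionIdeal.of_mono {M N : ModuleCat.{u} R} (f : M ⟶ N) [Mono f]
    (hN : IsTorsionIdeal 𝔞 N) : IsTorsionIdeal 𝔞 M := by
  intro m
  obtain ⟨n, hn⟩ := hN (f m)
  exact ⟨n, fun a ha => (ModuleCat.mono_iff_injective f).1 inferInstance
    (by rw [map_smul, hn a ha, map_zero])⟩

theorem IsTorsionIdeal.of_epi {M N : ModuleCat.{u} R} (f : M ⟶ N) [Epi f]
    (hM : IsTorsionIdeal 𝔞 M) : IsTorsionIdeal 𝔞 N := by
  intro m
  obtain ⟨m, rfl⟩ := (ModuleCat.epi_iff_surjective f).1 inferInstance m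
  obtain ⟨n, hn⟩ := hM m
  exact ⟨n, fun a ha => by rw [← map_smul, hn a ha, map_zero]⟩

end

namespace CategoryTheory.ShortComplex.ShortExact

open Abelian

variable {R : Type u} [CommRing R] [IsNoetherianRing R] {S : ShortComplex (ModuleCat.{u} R)}
  {N : ModuleCat.{u} R} {n : ℕ}

theorem finite_ext_X₂ (hS : S.ShortExact) (h₁ : Module.Finite R (Ext N S.X₁ n))
    (h₃ : Module.Finite R (Ext N S.X₃ n)) :
    Module.Finite R (Ext N S.X₂ n) :=
  Module.Finite.of_ker_le_range ((Ext.mk₀ S.f).postcompOfLinear R N (add_zero n))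
    ((Ext.mk₀ S.g).postcompOfLinear R N (add_zero n))
    fun x hx => Ext.covariant_sequence_exact₂ N hS x hx

theorem finite_ext_X₃ (hS : S.ShortExact) (h₂ : Module.Finite R (Ext N S.X₂ n))
    (h₁ : Module.Finite R (Ext N S.X₁ (n + 1))) : Module.Finite R (Ext N S.X₃ n) :=
  Module.Finite.of_ker_le_range ((Ext.mk₀ S.g).postcompOfLinear R N (add_zero n))
    (hS.extClass.postcompOfLinear R N rfl)
    fun x hx => Ext.covariant_sequence_exact₃ N hS x rfl hx

theorem finite_ext_X₁_succ (hS : S.ShortExact) (h₃ : Module.Finite R (Ext N S.X₃ n))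
    (h₂ : Module.Finite R (Ext N S.X₂ (n + 1))) : Module.Finite R (Ext N S.X₁ (n + 1)) :=
  Module.Finite.of_ker_le_range (hS.extClass.postcompOfLinear R N rfl)
    ((Ext.mk₀ S.f).postcompOfLinear R N (add_zero (n + 1)))
    fun x hx => Ext.covariant_sequence_exact₁ N hS x hx rfl

theorem finite_ext_X₁_zero (hS : S.ShortExact) (h₂ : Module.Finite R (Ext N S.X₂ 0)) :
    Module.Finite R (Ext N S.X₁ 0) := by
  have := hS.mono_f
  exact Module.Finite.of_injective ((Ext.mk₀ S.f).postcompOfLinear R N (add_zero 0))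
    (Ext.postcomp_mk₀_injective_of_mono N S.f)

end CategoryTheory.ShortComplex.ShortExact

namespace HomologicalComplex

open Limits

variable {C : Type*} [Category* C] [Abelian C] {ι : Type*} {c : ComplexShape ι}
  (K : HomologicalComplex C c) {i j : ι}

/-- The short complex `0 ⟶ B ⟶ K.X i ⟶ K.opcycles i ⟶ 0`, where `B` is the object of
boundaries. -/
noncomputable abbrev boundariesShortComplex (i : ι) : ShortComplex C :=
  .mk (kernel.ι (K.pOpcycles i)) (K.pOpcycles i) (kernel.condition _)

theorem boundariesShortComplex_shortExact (i : ι) : (K.boundariesShortComplex i).ShortExact where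
  exact := ShortComplex.exact_of_f_is_kernel _ (kernelIsKernel _)

theorem fromOpcycles_pOpcycles (i j : ι) : K.fromOpcycles i j ≫ K.pOpcycles j = 0 := by
  rw [← cancel_epi (K.pOpcycles i)]
  simp

/-- The short complex `0 ⟶ K.homology i ⟶ K.opcycles i ⟶ B ⟶ 0`, where `B` is the object of
boundaries in degree `j`. -/
noncomputable abbrev homologyShortComplex (i j : ι) : ShortComplex C :=
  .mk (K.homologyι i) (kernel.lift (K.pOpcycles j) (K.fromOpcycles i j)
    (K.fromOpcycles_pOpcycles i j)) (by rw [← cancel_mono (kernel.ι _)]; simp)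

theorem homologyShortComplex_shortExact (hi : c.next i = j) (hj : c.prev j = i) :
    (K.homologyShortComplex i j).ShortExact where
  exact := by
    let φ : K.homologyShortComplex i j ⟶
        ShortComplex.mk (K.homologyι i) (K.fromOpcycles i j) (by simp) :=
      { τ₁ := 𝟙 _, τ₂ := 𝟙 _, τ₃ := kernel.ι _ }
    have : Mono φ.τ₃ := inferInstanceAs (Mono (kernel.ι _))
    rw [ShortComplex.exact_iff_of_epi_of_isIso_of_mono φ]
    exact ShortComplex.exact_of_f_is_kernel _ (K.homologyIsKernel i j hi)
  epi_g := by
    have hex : (ShortComplex.mk (K.d i j) (K.pOpcycles j) (by simp)).Exact :=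
      ShortComplex.exact_of_g_is_cokernel _ (K.opcyclesIsCokernel i j hj)
    have := hex.epi_kernelLift
    have h : K.pOpcycles i ≫ (K.homologyShortComplex i j).g =
        kernel.lift (K.pOpcycles j) (K.d i j) (by simp) := by
      rw [← cancel_mono (kernel.ι _)]
      simp
    exact epi_of_epi_fac h

end HomologicalComplex

/-- Yang–Shen, Theorem 3.7: let `d ≥ 1` and `𝔞` a proper ideal of a noetherian local ring `R`
such that `dim R = d`, or `dim R/𝔞 = d - 1`, or `ara 𝔞 = d - 1`. For a (ℤ-indexed) chain
complex `X` of `𝔞`-cofinite `R`-modules, all homology modules `H_i(X)` are `𝔞`-cofinite if and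
only if `Ext^j_R(R/𝔞, coker d_{i+1})` is finitely generated for every `i ∈ ℤ` and `j ≤ d - 2`. -/
theorem homology_isCofinite_iff_ext_coker
    {R : Type u} [CommRing R] [IsNoetherianRing R] [IsLocalRing R]
    (d : ℕ) (hd : 1 ≤ d) (𝔞 : Ideal R) (ha : 𝔞 ≠ ⊤)
    (hcase : ringKrullDim R = d ∨ ringKrullDim (R ⧸ 𝔞) = (d - 1 : ℕ) ∨ arithRank 𝔞 = d - 1)
    (X : ChainComplex (ModuleCat.{u} R) ℤ)
    (hX : ∀ i : ℤ, IsCofinite 𝔞 (X.X i)) :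
    (∀ i : ℤ, IsCofinite 𝔞 (X.homology i)) ↔
      ∀ (i : ℤ) (j : ℕ), (j : ℤ) ≤ (d : ℤ) - 2 →
        Module.Finite R (extIdeal 𝔞 j (Limits.cokernel (X.d (i + 1) i))) := by
  simp only [isCofinite_iff] at hX ⊢
  let e (i : ℤ) : Limits.cokernel (X.d (i + 1) i) ≅ X.opcycles i :=
    (Limits.cokernelIsCokernel _).coconePointUniqueUpToIso
      (X.opcyclesIsCokernel (i + 1) i (by simp))
  let E (j : ℕ) (M : ModuleCat.{u} R) : Prop :=
    Module.Finite R (Abelian.Ext (ModuleCat.of R (R ⧸ 𝔞)) M j)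
  have he (i : ℤ) (j : ℕ) :
      Module.Finite R (extIdeal 𝔞 j (Limits.cokernel (X.d (i + 1) i))) ↔ E j (X.opcycles i) := by
    refine Iff.trans (Module.Finite.equiv_iff ?_) (Abelian.Ext.finite_extObj_iff _ _ _)
    exact (((Ext R (ModuleCat.{u} R) j).obj (Opposite.op (ModuleCat.of R (R ⧸ 𝔞)))).mapIso
      (e i)).toLinearEquiv
  simp only [he]
  have hB (i : ℤ) := X.boundariesShortComplex_shortExact i
  have hH (i : ℤ) := X.homologyShortComplex_shortExact (i := i) (j := i - 1) (by simp) (by simp)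
  refine ⟨fun h => ?_, fun h => ?_⟩
  · have key (j : ℕ) : ∀ i, E j (X.boundariesShortComplex i).X₁ ∧ E j (X.opcycles i) := by
      induction j with
      | zero =>
        have hb (i : ℤ) := (hB i).finite_ext_X₁_zero ((hX i).2 0)
        exact fun i => ⟨hb i, (hH i).finite_ext_X₂ ((h i).2 0) (hb (i - 1))⟩
      | succ j ih =>
        have hb (i : ℤ) := (hB i).finite_ext_X₁_succ (ih i).2 ((hX i).2 (j + 1))
        exact fun i => ⟨hb i, (hH i).finite_ext_X₂ ((h i).2 (j + 1)) (hb (i - 1))⟩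
    exact fun i j _ => (key j i).2
  · have hb (i : ℤ) (j : ℕ) : E j (X.boundariesShortComplex i).X₁ := by
      refine IsTorsionIdeal.finite_ext hd hcase
        ((hX i).1.of_mono (X.boundariesShortComplex i).f) (fun j hj => ?_) j
      cases j with
      | zero => exact (hB i).finite_ext_X₁_zero ((hX i).2 0)
      | succ j => exact (hB i).finite_ext_X₁_succ (h i j (by lia)) ((hX i).2 (j + 1))
    have hc (i : ℤ) (j : ℕ) : E j (X.opcycles i) :=
      (hB i).finite_ext_X₃ ((hX i).2 j) (hb i (j + 1))
    refine fun i => ⟨((hX i).1.of_epi (X.pOpcycles i)).of_mono (X.homologyι i), fun j => ?_⟩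
    cases j with
    | zero => exact (hH i).finite_ext_X₁_zero (hc i 0)
    | succ j => exact (hH i).finite_ext_X₁_succ (hb (i - 1) j) (hc i (j + 1))
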